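/- Let Ω ⊂ ℝⁿ and Ω̃ ⋐ Ω be bounded domains, both symmetric with respect to the hyperplane {x₁=0}, and let c ∈ L^∞(Ω⁺). Suppose u ∈ C^{2s+α}(Ω) ∩ 𝒜_s(ℝⁿ) for some α > 0 with 2s+α not an integer, u ≥ 0 in ℝⁿ₊, and (−Δ)^s u + c·u = 0 pointwise in Ω⁺. Then there exists a constant C ≥ 1, depending only on Ω, Ω̃, ‖c‖_{L^∞(Ω⁺)}, n and s, such that sup_{x∈Ω̃⁺} u(x)/x₁ ≤ C · inf_{x∈Ω̃⁺} u(x)/x₁, and moreover C⁻¹‖u‖_{𝒜_s(ℝⁿ)} ≤ inf_{x∈Ω̃⁺} u(x)/x₁ ≤ sup_{x∈Ω̃⁺} u(x)/x₁ ≤ C‖u‖_{𝒜_s(ℝⁿ)}. -/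

import Mathlib

/-!
The Harnack inequality for antisymmetric solutions is obtained from two barrier arguments, one for
each of the bounds `C⁻¹ ‖u‖ ≤ u(x)/x₁ ≤ C ‖u‖` with `‖u‖ = ‖u‖_{𝒜ₛ}`; the comparison of `u(x)/x₁`
at two points is their product. Both rest on continuity of `u` on `Ω`, nonnegativity and
`|(-Δ)ˢ u| ≤ K u` on `Ω⁺` (`IsNonnegSol`), and the constants depend on `Ω`, `Ωt`, `K`, `n`,
`s` through the cutoff below.

Two facts about the operator are needed. The linear function `y₁` satisfies `(-Δ)ˢ y₁ = 0`
(`hasAntiFracLap_coord`). If `ξ` is even in `y₁`, bounded, with second differences bounded by `A`,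
then `(-Δ)ˢ (y₁ ξ)(x)` is bounded by a constant times `x₁ (A ρ^{2-2s} + sup|ξ| ρ^{-2s})` for every
`ρ > 0`, uniformly in the truncation (`truncOp_coord_mul`); the factor `x₁` comes from the
antisymmetric kernel, and the symmetrisation `sigma` about `x` cancels the first order terms of `ξ`.
The kernel itself is comparable to `x₁` times the weight of `𝒜ₛ` away from the diagonal
(`weight_le_aKernel`, `aKernel_le_weight`).

Let `η` be an even cutoff, `η = 1` on `Ωt`, supported compactly in `Ω`.

*Lower bound* (`lower_bound`). If `u - t y₁ η` had a negative minimum at `x`, then the equation at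
`x`, the bound for `(-Δ)ˢ(y₁ η)` and the positive contribution `≳ x₁ (‖u‖ - t ‖y₁ η‖)` of the
nonlocal term give `‖u‖ ≤ C t`; so `u ≥ c ‖u‖ y₁ η`.

*Upper bound* (`upper_bound`). If `u - t y₁ η^{-N}`, `N = n + 2`, had a positive maximum at `x`, with
`h₀ = η(x)`, then `u` is touched from above at `x`, on the ball of radius `θ h₀`, by
`t h₀^{-N} y₁ G(η/h₀)` plus a constant, where `G` is a bounded positive `C^{1,1}` profile above
`τ^{-N}` near `τ = 1` (`exists_profile`). Since `y₁ G(η/h₀)` stays above a multiple of `y₁` outside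
the ball, the nonlocal term gains a multiple of `(θ h₀)^{-2s}` (`gain_coord`, `gain_one`), which for
small `θ` beats the errors from `G` and `K`. What remains is the contribution of `u` outside the
ball, at most a multiple of `x₁ (θ h₀)^{-n-2s-2} ‖u‖`; the choice of `N` makes the powers of `h₀`
cancel and gives `t ≤ C ‖u‖`.
-/
open MeasureTheory Metric Filter Topology

noncomputable section

/-- Euclidean space `ℝⁿ`. -/
abbrev Euc (n : ℕ) := EuclideanSpace ℝ (Fin n)

/-- Reflection `x ↦ x_* = (-x₁, x')` across the hyperplane `{x₁ = 0}`. -/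
def reflFirst (n : ℕ) [NeZero n] (x : Euc n) : Euc n :=
  x - (2 * x 0) • EuclideanSpace.single 0 1

/-- The open half space `ℝⁿ₊ = {x : x₁ > 0}`. -/
def halfSpace (n : ℕ) [NeZero n] : Set (Euc n) := {x | 0 < x 0}

/-- `u` is antisymmetric: `u(x_*) = -u(x)`. -/
def AntiSymmFn (n : ℕ) [NeZero n] (u : Euc n → ℝ) : Prop :=
  ∀ x, u (reflFirst n x) = - u x

/-- The normalising constant `c_{n,s}` of the fractional Laplacian. -/
def cns (n : ℕ) (s : ℝ) : ℝ :=
  s * (4 : ℝ) ^ s * Real.Gamma (((n : ℝ) + 2 * s) / 2) /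
    (Real.pi ^ ((n : ℝ) / 2) * Real.Gamma (1 - s))

/-- The constant `γ_{n,s}` of the mean value formula. -/
def gammans (n : ℕ) (s : ℝ) : ℝ :=
  Real.sin (Real.pi * s) * Real.Gamma ((n : ℝ) / 2) / Real.pi ^ ((n : ℝ) / 2 + 1)

/-- The first standard basis vector `e₁`. -/
def e1 (n : ℕ) [NeZero n] : Euc n := EuclideanSpace.single 0 1

/-- `‖u‖_{𝒜ₛ(ℝⁿ)} = ∫_{ℝⁿ₊} x₁|u(x)|/(1+|x|^{n+2s+2}) dx`. -/
def ANorm (n : ℕ) [NeZero n] (s : ℝ) (u : Euc n → ℝ) : ℝ :=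
  ∫ x in halfSpace n, x 0 * |u x| / (1 + ‖x‖ ^ ((n : ℝ) + 2 * s + 2))

/-- `u ∈ 𝒜ₛ(ℝⁿ)`. -/
def MemA (n : ℕ) [NeZero n] (s : ℝ) (u : Euc n → ℝ) : Prop :=
  AntiSymmFn n u ∧ LocallyIntegrable u volume ∧
    IntegrableOn (fun x => x 0 * |u x| / (1 + ‖x‖ ^ ((n : ℝ) + 2 * s + 2))) (halfSpace n) volume

/-- `u ∈ ℒₛ(ℝⁿ)`. -/
def MemL (n : ℕ) (s : ℝ) (u : Euc n → ℝ) : Prop :=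
  LocallyIntegrable u volume ∧
    Integrable (fun x => |u x| / (1 + ‖x‖ ^ ((n : ℝ) + 2 * s))) volume

/-- Membership in the Hölder space `C^β = C^{⌊β⌋, β-⌊β⌋}` on `Ω`. -/
def MemHolderOn {X : Type*} [NormedAddCommGroup X] [NormedSpace ℝ X]
    (β : ℝ) (Ω : Set X) (u : X → ℝ) : Prop :=
  ContDiffOn ℝ (⌊β⌋₊ : ℕ) u Ω ∧
    ∃ C : NNReal, HolderOnWith C (β - ⌊β⌋₊).toNNReal (iteratedFDerivWithin ℝ ⌊β⌋₊ u Ω) Ω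

/-- `K` bounds the `C^β = C^{⌊β⌋, β-⌊β⌋}` norm of `u` on `Ω`. -/
def HolderBoundBy {X : Type*} [NormedAddCommGroup X] [NormedSpace ℝ X]
    (β : ℝ) (Ω : Set X) (u : X → ℝ) (K : ℝ) : Prop :=
  (∀ i ≤ ⌊β⌋₊, ∀ x ∈ Ω, ‖iteratedFDerivWithin ℝ i u Ω x‖ ≤ K) ∧
    HolderOnWith K.toNNReal (β - ⌊β⌋₊).toNNReal (iteratedFDerivWithin ℝ ⌊β⌋₊ u Ω) Ω

/-- `β` is not an integer. -/
def NotInteger (β : ℝ) : Prop := ∀ k : ℤ, β ≠ k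

/-- The antisymmetric kernel `|x-y|^{-n-2s} - |x_*-y|^{-n-2s}`. -/
def aKernel (n : ℕ) [NeZero n] (s : ℝ) (x y : Euc n) : ℝ :=
  ‖x - y‖ ^ (-((n : ℝ) + 2 * s)) - ‖reflFirst n x - y‖ ^ (-((n : ℝ) + 2 * s))

/-- `(-Δ)ˢ u (x) = L` in the antisymmetric sense of Definition 1.4:
the truncated integrals over `ℝⁿ₊ ∖ B_ε(x)` (plus the constant zero-th order term)
converge to `L` as `ε → 0⁺`. -/
def HasAntiFracLap (n : ℕ) [NeZero n] (s : ℝ) (u : Euc n → ℝ) (x : Euc n) (L : ℝ) : Prop :=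
  Filter.Tendsto
    (fun ε : ℝ =>
      cns n s * (∫ y in halfSpace n \ Metric.ball x ε, aKernel n s x y * (u x - u y)) +
        (cns 1 s / s) * u x * (x 0) ^ (-(2 * s)))
    (𝓝[>] (0 : ℝ)) (𝓝 L)

/-- `(-Δ)ˢ u (x) = L` in the principal value sense. -/
def HasPVFracLap (n : ℕ) (s : ℝ) (u : Euc n → ℝ) (x : Euc n) (L : ℝ) : Prop :=
  Filter.Tendsto
    (fun ε : ℝ =>
      cns n s * ∫ y in (Metric.ball x ε)ᶜ, (u x - u y) / ‖x - y‖ ^ ((n : ℝ) + 2 * s))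
    (𝓝[>] (0 : ℝ)) (𝓝 L)

/-! ### The reflection and the antisymmetric kernel -/

/-- `reflFirst` as a linear isometry: the reflection across the hyperplane orthogonal to `e₁`. -/
def reflIso (n : ℕ) [NeZero n] : Euc n ≃ₗᵢ[ℝ] Euc n :=
  ((Submodule.span ℝ {e1 n})ᗮ).reflection

section Basics

variable {n : ℕ} [NeZero n] {s : ℝ}

@[simp] lemma e1_apply_zero : (e1 n) 0 = 1 := by simp [e1]

@[simp] lemma norm_e1 : ‖e1 n‖ = 1 := by simp [e1]

lemma inner_e1 (x : Euc n) : inner ℝ (e1 n) x = x 0 := by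
  simp [e1, EuclideanSpace.inner_single_left]

lemma reflFirst_eq (x : Euc n) : reflFirst n x = x - (2 * x 0) • e1 n := rfl

lemma reflIso_apply (x : Euc n) : reflIso n x = reflFirst n x := by
  rw [reflIso, Submodule.reflection_orthogonal_apply,
    Submodule.reflection_singleton_apply, inner_e1, reflFirst_eq, norm_e1]
  simp only [Real.ringHom_apply, one_pow, div_one, RCLike.ofReal_one, neg_sub]
  module

lemma reflFirst_zero_coord (x : Euc n) : (reflFirst n x) 0 = - x 0 := by
  simp [reflFirst_eq]; ring

lemma reflFirst_reflFirst (x : Euc n) : reflFirst n (reflFirst n x) = x := by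
  simp only [reflFirst_eq (reflFirst n x), reflFirst_zero_coord]
  simp [reflFirst_eq]

lemma norm_reflFirst (x : Euc n) : ‖reflFirst n x‖ = ‖x‖ := by
  rw [← reflIso_apply]; exact (reflIso n).norm_map x

lemma reflFirst_sub (x y : Euc n) : reflFirst n (x - y) = reflFirst n x - reflFirst n y := by
  simp only [← reflIso_apply]; exact map_sub _ _ _

lemma reflFirst_add (x y : Euc n) : reflFirst n (x + y) = reflFirst n x + reflFirst n y := by
  simp only [← reflIso_apply]; exact map_add _ _ _

lemma norm_reflFirst_sub_comm (x y : Euc n) :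
    ‖reflFirst n x - y‖ = ‖x - reflFirst n y‖ := by
  rw [← norm_reflFirst, reflFirst_sub, reflFirst_reflFirst]

lemma measurePreserving_reflFirst : MeasurePreserving (reflFirst n) volume volume := by
  have h := (reflIso n).measurePreserving
  have e : (⇑(reflIso n)) = reflFirst n := funext reflIso_apply
  rwa [e] at h

lemma measurableEmbedding_reflFirst : MeasurableEmbedding (reflFirst n) := by
  have h := (reflIso n).toHomeomorph.measurableEmbedding
  have e : (⇑((reflIso n).toHomeomorph)) = reflFirst n := funext reflIso_apply
  rwa [e] at h

lemma continuous_reflFirst : Continuous (reflFirst n) := by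
  have h := (reflIso n).continuous
  have e : (⇑(reflIso n)) = reflFirst n := funext reflIso_apply
  rwa [e] at h

lemma measurableSet_halfSpace : MeasurableSet (halfSpace n) := by
  have : IsOpen {x : Euc n | 0 < x 0} := isOpen_lt continuous_const (by fun_prop)
  exact this.measurableSet

lemma abs_coord_le (x : Euc n) : |x 0| ≤ ‖x‖ := by
  simpa using PiLp.norm_apply_le x 0

lemma norm_reflFirst_sub_sq (x y : Euc n) :
    ‖reflFirst n x - y‖ ^ 2 = ‖x - y‖ ^ 2 + 4 * x 0 * y 0 := by
  have h : reflFirst n x - y = (x - y) - (2 * x 0) • e1 n := by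
    rw [reflFirst_eq]; abel
  rw [h, norm_sub_sq_real, norm_smul, norm_e1, real_inner_comm, inner_smul_left, inner_e1]
  simp [mul_pow]
  ring

lemma norm_sub_le_norm_reflFirst_sub {x y : Euc n} (hx : 0 < x 0) (hy : 0 < y 0) :
    ‖x - y‖ ≤ ‖reflFirst n x - y‖ := by
  have h := norm_reflFirst_sub_sq x y
  have : 0 < x 0 * y 0 := mul_pos hx hy
  exact le_of_abs_le (abs_le_of_sq_le_sq (by nlinarith) (norm_nonneg _))

lemma coord_add_le_norm (x y : Euc n) : x 0 + y 0 ≤ ‖reflFirst n x - y‖ := by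
  have h := abs_coord_le (reflFirst n x - y)
  have e : (reflFirst n x - y) 0 = -(x 0 + y 0) := by
    simp [reflFirst_zero_coord]; ring
  rw [e, abs_neg] at h
  exact (le_abs_self _).trans h

/-- Two-sided difference-quotient bound for `τ ↦ τ ^ (-γ)`. -/
lemma rpow_neg_sub_bounds {P Q γ : ℝ} (hP : 0 < P) (hPQ : P ≤ Q) (hγ : 0 < γ) :
    γ * (Q - P) * Q ^ (-γ - 1) ≤ P ^ (-γ) - Q ^ (-γ) ∧
      P ^ (-γ) - Q ^ (-γ) ≤ γ * (Q - P) * P ^ (-γ - 1) := by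
  rcases hPQ.eq_or_lt with rfl | hlt
  · simp
  obtain ⟨c, hc, hc'⟩ := exists_hasDerivAt_eq_slope (fun t : ℝ => t ^ (-γ))
    (fun t => -γ * t ^ (-γ - 1)) hlt
    (ContinuousOn.rpow_const continuousOn_id (fun t ht => Or.inl (hP.trans_le ht.1).ne'))
    (fun t ht => Real.hasDerivAt_rpow_const (Or.inl (hP.trans ht.1).ne'))
  have hQP : 0 < Q - P := sub_pos.2 hlt
  rw [eq_div_iff hQP.ne'] at hc'
  have e : P ^ (-γ) - Q ^ (-γ) = γ * (Q - P) * c ^ (-γ - 1) := by linarith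
  rw [e]
  have hc0 : 0 < c := hP.trans hc.1
  constructor
  · exact mul_le_mul_of_nonneg_left
      (Real.rpow_le_rpow_of_nonpos hc0 hc.2.le (by linarith)) (by positivity)
  · exact mul_le_mul_of_nonneg_left
      (Real.rpow_le_rpow_of_nonpos hP hc.1.le (by linarith)) (by positivity)

lemma sq_rpow_half {a : ℝ} (ha : 0 ≤ a) (b : ℝ) : (a ^ 2) ^ (b / 2) = a ^ b := by
  rw [← Real.rpow_natCast, ← Real.rpow_mul ha]; congr 1; push_cast; ring

lemma beta_pos (hs : 0 < s) : 1 < (n : ℝ) + 2 * s := by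
  have : 1 ≤ n := NeZero.one_le
  have : (1 : ℝ) ≤ n := by exact_mod_cast this
  linarith

lemma aKernel_bounds (hs : 0 < s) {x y : Euc n} (hx : 0 < x 0) (hy : 0 < y 0) (hxy : x ≠ y) :
    2 * (n + 2 * s) * (x 0 * y 0) * ‖reflFirst n x - y‖ ^ (-((n : ℝ) + 2 * s) - 2)
        ≤ aKernel n s x y ∧
      aKernel n s x y ≤ 2 * (n + 2 * s) * (x 0 * y 0) * ‖x - y‖ ^ (-((n : ℝ) + 2 * s) - 2) := by
  have hβ := beta_pos (n := n) hs
  have ha : 0 < ‖x - y‖ := norm_pos_iff.2 (sub_ne_zero.2 hxy)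
  have hab := norm_sub_le_norm_reflFirst_sub hx hy
  have hsq := norm_reflFirst_sub_sq x y
  have h := rpow_neg_sub_bounds (P := ‖x - y‖ ^ 2) (Q := ‖reflFirst n x - y‖ ^ 2)
    (γ := ((n : ℝ) + 2 * s) / 2) (by positivity) (by gcongr) (by linarith)
  have e1 : -(((n : ℝ) + 2 * s) / 2) = (-((n : ℝ) + 2 * s)) / 2 := by ring
  have e2 : -(((n : ℝ) + 2 * s) / 2) - 1 = (-((n : ℝ) + 2 * s) - 2) / 2 := by ring
  rw [e2, e1, sq_rpow_half ha.le, sq_rpow_half (norm_nonneg _), sq_rpow_half (norm_nonneg _),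
    sq_rpow_half ha.le] at h
  have e3 : ((n : ℝ) + 2 * s) / 2 * (‖reflFirst n x - y‖ ^ 2 - ‖x - y‖ ^ 2)
      = 2 * (n + 2 * s) * (x 0 * y 0) := by rw [hsq]; ring
  rw [e3] at h
  exact h

lemma aKernel_nonneg (hs : 0 < s) {x y : Euc n} (hx : 0 < x 0) (hy : 0 < y 0) (hxy : x ≠ y) :
    0 ≤ aKernel n s x y := by
  refine le_trans ?_ (aKernel_bounds hs hx hy hxy).1
  have := beta_pos (n := n) hs
  positivity

lemma aKernel_le (x y : Euc n) :
    aKernel n s x y ≤ ‖x - y‖ ^ (-((n : ℝ) + 2 * s)) := by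
  rw [aKernel]
  have : 0 ≤ ‖reflFirst n x - y‖ ^ (-((n : ℝ) + 2 * s)) := by positivity
  linarith

/-- The weighted kernel `K(x,y) y₁` is `O(x₁ |x-y|^{-n-2s})`, uniformly up to the boundary. -/
lemma aKernel_mul_coord_le (hs : 0 < s) {x y : Euc n} (hx : 0 < x 0) (hy : 0 < y 0)
    (hxy : x ≠ y) :
    aKernel n s x y * y 0 ≤ 8 * (n + 2 * s) * x 0 * ‖x - y‖ ^ (-((n : ℝ) + 2 * s)) := by
  have hβ := beta_pos (n := n) hs
  have ha : 0 < ‖x - y‖ := norm_pos_iff.2 (sub_ne_zero.2 hxy)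
  have hr : 0 < ‖x - y‖ ^ (-((n : ℝ) + 2 * s)) := by positivity
  rcases le_or_gt (y 0) (2 * x 0) with h | h
  · calc aKernel n s x y * y 0 ≤ ‖x - y‖ ^ (-((n : ℝ) + 2 * s)) * (2 * x 0) :=
        mul_le_mul (aKernel_le x y) h hy.le hr.le
      _ = 2 * (x 0 * ‖x - y‖ ^ (-((n : ℝ) + 2 * s))) := by ring
      _ ≤ (8 * (n + 2 * s)) * (x 0 * ‖x - y‖ ^ (-((n : ℝ) + 2 * s))) := by
        gcongr; linarith
      _ = _ := by ring
  · have h1 : y 0 ≤ 2 * ‖x - y‖ := by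
      have := abs_coord_le (x - y)
      have e : (x - y) 0 = x 0 - y 0 := by simp
      rw [e] at this
      have := neg_abs_le (x 0 - y 0)
      linarith
    calc aKernel n s x y * y 0
        ≤ (2 * (n + 2 * s) * (x 0 * y 0) * ‖x - y‖ ^ (-((n : ℝ) + 2 * s) - 2)) * y 0 := by
          gcongr; exact (aKernel_bounds hs hx hy hxy).2
      _ = 2 * (n + 2 * s) * x 0 * (y 0) ^ 2 * ‖x - y‖ ^ (-((n : ℝ) + 2 * s) - 2) := by ring
      _ ≤ 2 * (n + 2 * s) * x 0 * (2 * ‖x - y‖) ^ 2 * ‖x - y‖ ^ (-((n : ℝ) + 2 * s) - 2) := by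
          gcongr
      _ = 8 * (n + 2 * s) * x 0 * (‖x - y‖ ^ (2 : ℝ) * ‖x - y‖ ^ (-((n : ℝ) + 2 * s) - 2)) := by
          rw [Real.rpow_two]; ring
      _ = _ := by
          rw [← Real.rpow_add ha]; congr 2; ring

lemma measurable_aKernel (x : Euc n) : Measurable (fun y => aKernel n s x y) := by
  unfold aKernel
  fun_prop

end Basics

/-! ### Radial integrals and the normalising constant -/

/-- The surface measure `n |B₁|` of the unit sphere of `ℝⁿ`. -/
def sphereConst (n : ℕ) : ℝ := n * volume.real (ball (0 : Euc n) 1)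

section Radial

variable {n : ℕ} [NeZero n] {s : ℝ}

instance : Nontrivial (Euc n) := by
  have : Nonempty (Fin n) := ⟨0⟩
  infer_instance

lemma sphereConst_pos : 0 < sphereConst n := by
  have h1 : (0 : ℝ) < n := by exact_mod_cast (NeZero.pos n)
  have h2 : 0 < volume.real (ball (0 : Euc n) 1) :=
    ENNReal.toReal_pos (measure_ball_pos _ _ one_pos).ne' measure_ball_lt_top.ne
  exact mul_pos h1 h2

lemma pow_mul_rpow {q y : ℝ} (hy : 0 < y) :
    y ^ (Module.finrank ℝ (Euc n) - 1) • y ^ q = y ^ ((n : ℝ) - 1 + q) := by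
  have h1 : 1 ≤ n := NeZero.one_le
  rw [finrank_euclideanSpace_fin, smul_eq_mul, ← Real.rpow_natCast, ← Real.rpow_add hy]
  congr 1
  push_cast [Nat.cast_sub h1]
  ring

lemma integrableOn_ball_norm_rpow {q ρ : ℝ} (hq : -(n : ℝ) < q) :
    IntegrableOn (fun z : Euc n => ‖z‖ ^ q) (ball 0 ρ) := by
  rw [integrableOn_fun_norm_addHaar volume (f := fun y => y ^ q)]
  rcases le_or_gt ρ 0 with h | hρ
  · simp [h]
  rw [integrableOn_congr_fun (g := fun y => y ^ ((n : ℝ) - 1 + q))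
    (fun y hy => pow_mul_rpow hy.1) measurableSet_Ioo]
  exact ((intervalIntegral.intervalIntegrable_rpow' (by linarith)).1).mono_set
    Set.Ioo_subset_Ioc_self

lemma integral_ball_norm_rpow {q ρ : ℝ} (hq : -(n : ℝ) < q) (hρ : 0 < ρ) :
    ∫ z in ball (0 : Euc n) ρ, ‖z‖ ^ q = sphereConst n * (ρ ^ ((n : ℝ) + q) / (n + q)) := by
  have e : ∀ z : Euc n, (ball (0 : Euc n) ρ).indicator (fun z => ‖z‖ ^ q) z
      = (fun y => (Set.Iio ρ).indicator (fun y : ℝ => y ^ q) y) ‖z‖ := by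
    intro z; simp [Set.indicator]
  rw [← integral_indicator measurableSet_ball, integral_congr_ae (.of_forall e),
    integral_fun_norm_addHaar volume
      (fun y => (Set.Iio ρ).indicator (fun y : ℝ => y ^ q) y)]
  have e2 : ∫ y in Set.Ioi (0 : ℝ), y ^ (Module.finrank ℝ (Euc n) - 1) •
      (Set.Iio ρ).indicator (fun y : ℝ => y ^ q) y = ρ ^ ((n : ℝ) + q) / (n + q) := by
    have : ∀ y ∈ Set.Ioi (0 : ℝ), y ^ (Module.finrank ℝ (Euc n) - 1) •
      (Set.Iio ρ).indicator (fun y : ℝ => y ^ q) y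
        = (Set.Iio ρ).indicator (fun y : ℝ => y ^ ((n : ℝ) - 1 + q)) y := by
      intro y hy
      by_cases h : y ∈ Set.Iio ρ
      · rw [Set.indicator_of_mem h, Set.indicator_of_mem h, pow_mul_rpow hy]
      · simp [Set.indicator_of_notMem h]
    rw [setIntegral_congr_fun measurableSet_Ioi this,
      setIntegral_indicator measurableSet_Iio, Set.Ioi_inter_Iio,
      ← integral_Ioc_eq_integral_Ioo, ← intervalIntegral.integral_of_le hρ.le,
      integral_rpow (Or.inl (by linarith))]
    rw [Real.zero_rpow (by linarith), sub_zero, show (n : ℝ) - 1 + q + 1 = n + q by ring]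
  rw [e2, sphereConst]
  simp [mul_assoc]

lemma integrableOn_compl_ball_norm_rpow {q ρ : ℝ} (hq : q < -(n : ℝ)) (hρ : 0 < ρ) :
    IntegrableOn (fun z : Euc n => ‖z‖ ^ q) (ball 0 ρ)ᶜ := by
  have e : ∀ z : Euc n, ((ball (0 : Euc n) ρ)ᶜ).indicator (fun z => ‖z‖ ^ q) z
      = (fun y => (Set.Ici ρ).indicator (fun y : ℝ => y ^ q) y) ‖z‖ := by
    intro z; simp [Set.indicator]
  rw [← integrable_indicator_iff measurableSet_ball.compl, integrable_congr (.of_forall e),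
    integrable_fun_norm_addHaar volume
      (f := fun y => (Set.Ici ρ).indicator (fun y : ℝ => y ^ q) y)]
  have : Set.EqOn (fun y : ℝ => y ^ (Module.finrank ℝ (Euc n) - 1) •
      (Set.Ici ρ).indicator (fun y : ℝ => y ^ q) y)
        ((Set.Ici ρ).indicator (fun y : ℝ => y ^ ((n : ℝ) - 1 + q))) (Set.Ioi 0) := by
      intro y hy
      by_cases h : y ∈ Set.Ici ρ
      · simp only [Set.indicator_of_mem h, pow_mul_rpow hy]
      · simp [Set.indicator_of_notMem h]
  rw [integrableOn_congr_fun this measurableSet_Ioi]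
  apply Integrable.integrableOn
  rw [integrable_indicator_iff measurableSet_Ici, integrableOn_Ici_iff_integrableOn_Ioi]
  exact integrableOn_Ioi_rpow_of_lt (by linarith) hρ

lemma integral_compl_ball_norm_rpow {q ρ : ℝ} (hq : q < -(n : ℝ)) (hρ : 0 < ρ) :
    ∫ z in (ball (0 : Euc n) ρ)ᶜ, ‖z‖ ^ q
      = sphereConst n * (ρ ^ ((n : ℝ) + q) / (-(n + q))) := by
  have e : ∀ z : Euc n, ((ball (0 : Euc n) ρ)ᶜ).indicator (fun z => ‖z‖ ^ q) z
      = (fun y => (Set.Ici ρ).indicator (fun y : ℝ => y ^ q) y) ‖z‖ := by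
    intro z; simp [Set.indicator]
  rw [← integral_indicator measurableSet_ball.compl, integral_congr_ae (.of_forall e),
    integral_fun_norm_addHaar volume
      (fun y => (Set.Ici ρ).indicator (fun y : ℝ => y ^ q) y)]
  have e2 : ∫ y in Set.Ioi (0 : ℝ), y ^ (Module.finrank ℝ (Euc n) - 1) •
      (Set.Ici ρ).indicator (fun y : ℝ => y ^ q) y = ρ ^ ((n : ℝ) + q) / (-(n + q)) := by
    have : ∀ y ∈ Set.Ioi (0 : ℝ), y ^ (Module.finrank ℝ (Euc n) - 1) •
      (Set.Ici ρ).indicator (fun y : ℝ => y ^ q) y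
        = (Set.Ici ρ).indicator (fun y : ℝ => y ^ ((n : ℝ) - 1 + q)) y := by
      intro y hy
      by_cases h : y ∈ Set.Ici ρ
      · rw [Set.indicator_of_mem h, Set.indicator_of_mem h, pow_mul_rpow hy]
      · simp [Set.indicator_of_notMem h]
    have e3 : Set.Ioi (0 : ℝ) ∩ Set.Ici ρ = Set.Ici ρ :=
      Set.inter_eq_right.2 (fun y hy => hρ.trans_le hy)
    rw [setIntegral_congr_fun measurableSet_Ioi this,
      setIntegral_indicator measurableSet_Ici, e3, integral_Ici_eq_integral_Ioi,
      integral_Ioi_rpow_of_lt (by linarith) hρ, neg_div, ← div_neg,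
      show (n : ℝ) - 1 + q + 1 = n + q by ring]
  rw [e2, sphereConst]
  simp [mul_assoc]

/-- A Gaussian integrated over the half space `{z₁ > a}`, reduced to one variable. -/
lemma integral_gaussian_half (a t : ℝ) (ht : 0 < t) :
    ∫ z in {z : Euc n | a < z 0}, Real.exp (-t * ‖z‖ ^ 2)
      = (Real.pi / t) ^ (((n : ℝ) - 1) / 2) * ∫ w in Set.Ioi a, Real.exp (-t * w ^ 2) := by
  classical
  let f : Fin n → ℝ → ℝ := fun i w =>
    if i = 0 then (Set.Ioi a).indicator (fun w => Real.exp (-t * w ^ 2)) w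
    else Real.exp (-t * w ^ 2)
  have hm : MeasurableSet {z : Euc n | a < z 0} :=
    (isOpen_lt continuous_const (by fun_prop)).measurableSet
  have h1 : ∀ z : Fin n → ℝ, {z : Euc n | a < z 0}.indicator
      (fun z => Real.exp (-t * ‖z‖ ^ 2)) (WithLp.toLp 2 z) = ∏ i, f i (z i) := by
    intro z
    have h0 : ∏ i, f i (z i) = f 0 (z 0) * ∏ i ∈ Finset.univ.erase 0, f i (z i) :=
      (Finset.mul_prod_erase _ _ (Finset.mem_univ 0)).symm
    have h2 : ∏ i ∈ Finset.univ.erase (0 : Fin n), f i (z i)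
        = ∏ i ∈ Finset.univ.erase (0 : Fin n), Real.exp (-t * z i ^ 2) :=
      Finset.prod_congr rfl (fun i hi => by simp [f, Finset.ne_of_mem_erase hi])
    rw [h0, h2]
    by_cases ha : a < z 0
    · rw [Set.indicator_of_mem (by simpa using ha)]
      simp only [f, if_true, Set.indicator_of_mem (Set.mem_Ioi.2 ha)]
      rw [Finset.mul_prod_erase _ (fun i => Real.exp (-t * z i ^ 2)) (Finset.mem_univ 0),
        ← Real.exp_sum, EuclideanSpace.norm_sq_eq, Finset.mul_sum]
      simp
    · rw [Set.indicator_of_notMem (by simpa using ha)]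
      simp [f, Set.indicator_of_notMem (show z 0 ∉ Set.Ioi a from ha)]
  rw [← integral_indicator hm, ← (PiLp.volume_preserving_toLp (Fin n)).integral_comp
      (MeasurableEquiv.toLp 2 _).measurableEmbedding]
  simp_rw [h1]
  rw [integral_fintype_prod_volume_eq_prod, ← Finset.mul_prod_erase _ _ (Finset.mem_univ 0)]
  have h3 : ∏ i ∈ Finset.univ.erase (0 : Fin n), ∫ w, f i w
      = (Real.pi / t) ^ (((n : ℝ) - 1) / 2) := by
    have : ∀ i ∈ Finset.univ.erase (0 : Fin n), ∫ w, f i w = √(Real.pi / t) := by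
      intro i hi
      simp only [f, Finset.ne_of_mem_erase hi, if_false]
      exact integral_gaussian t
    rw [Finset.prod_congr rfl this, Finset.prod_const, Finset.card_erase_of_mem (Finset.mem_univ _),
      Finset.card_univ, Fintype.card_fin, Real.sqrt_eq_rpow, ← Real.rpow_natCast,
      ← Real.rpow_mul (by positivity)]
    congr 1
    push_cast [Nat.cast_sub (NeZero.one_le : 1 ≤ n)]
    ring
  have h4 : ∫ w, f 0 w = ∫ w in Set.Ioi a, Real.exp (-t * w ^ 2) := by
    simp only [f, if_true]
    rw [integral_indicator measurableSet_Ioi]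
  rw [h3, h4, mul_comm]

lemma integrableOn_gaussian_half (a t : ℝ) (ht : 0 < t) :
    IntegrableOn (fun z : Euc n => Real.exp (-t * ‖z‖ ^ 2)) {z : Euc n | a < z 0} := by
  have := GaussianFourier.integrable_cexp_neg_mul_sq_norm_add (V := Euc n) (b := (t : ℂ))
    (by simpa using ht) 0 0
  have h := this.norm
  refine Integrable.integrableOn ?_
  refine h.congr (.of_forall fun z => ?_)
  simp [Complex.norm_exp, ← Complex.ofReal_pow]

/-- Integrating the fractional kernel over a half space; the normalising constants are those
for which the result is the zeroth-order coefficient of the antisymmetric operator. The kernel is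
written as a superposition of Gaussians, for which the tangential variables integrate out. -/
lemma integral_half_norm_rpow (hs : 0 < s) {a : ℝ} (ha : 0 < a) :
    ∫ z in {z : Euc n | a < z 0}, ‖z‖ ^ (-((n : ℝ) + 2 * s))
      = Real.pi ^ (((n : ℝ) - 1) / 2) * Real.Gamma ((1 + 2 * s) / 2) /
          Real.Gamma (((n : ℝ) + 2 * s) / 2) * (a ^ (-(2 * s)) / (2 * s)) := by
  have hβ := beta_pos (n := n) hs
  set γ : ℝ := ((n : ℝ) + 2 * s) / 2 with hγ
  have hγ0 : 0 < γ := by rw [hγ]; linarith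
  set S : Set (Euc n) := {z : Euc n | a < z 0} with hS
  have hSm : MeasurableSet S := (isOpen_lt continuous_const (by fun_prop)).measurableSet
  -- both iterated integrals of `t ^ (γ - 1) * exp (-t ‖z‖²)` are computed in `ℝ≥0∞`
  have key : ∀ {r : ℝ} {g : ℝ}, 0 < r → 0 < g →
      ∫⁻ t in Set.Ioi (0 : ℝ), ENNReal.ofReal (t ^ (g - 1) * Real.exp (-t * r ^ 2))
        = ENNReal.ofReal (Real.Gamma g * r ^ (-(2 * g))) := by
    intro r g hr hg
    have hI := Real.integral_rpow_mul_exp_neg_mul_Ioi hg (show 0 < r ^ 2 by positivity)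
    have hfun : ∀ t : ℝ, t ^ (g - 1) * Real.exp (-t * r ^ 2)
        = t ^ (g - 1) * Real.exp (-(r ^ 2 * t)) := fun t => by ring_nf
    simp_rw [hfun]
    have hval : (1 / r ^ 2) ^ g * Real.Gamma g = Real.Gamma g * r ^ (-(2 * g)) := by
      rw [one_div, Real.inv_rpow (by positivity), ← Real.rpow_natCast, ← Real.rpow_mul hr.le,
        ← Real.rpow_neg hr.le, mul_comm]
      norm_num
    rw [← hval, ← hI, ofReal_integral_eq_lintegral_ofReal]
    · by_contra hni
      rw [integral_undef hni] at hI
      have : 0 < (1 / r ^ 2) ^ g * Real.Gamma g :=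
        mul_pos (by positivity) (Real.Gamma_pos_of_pos hg)
      linarith
    · filter_upwards [self_mem_ae_restrict measurableSet_Ioi] with t ht
      have : (0 : ℝ) < t := ht
      positivity
  have hpos : ∀ z ∈ S, 0 < ‖z‖ := fun z hz =>
    (ha.trans hz).trans_le ((le_abs_self _).trans (abs_coord_le z))
  have hInt : IntegrableOn (fun z : Euc n => ‖z‖ ^ (-((n : ℝ) + 2 * s))) S := by
    refine (integrableOn_compl_ball_norm_rpow (q := -((n : ℝ) + 2 * s)) (by linarith) ha).mono_set ?_
    intro z hz
    have : a < ‖z‖ := lt_of_lt_of_le hz ((le_abs_self _).trans (abs_coord_le z))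
    simpa using this.le
  have hGpos := Real.Gamma_pos_of_pos hγ0
  have hG1pos := Real.Gamma_pos_of_pos (show 0 < (1 + 2 * s) / 2 by linarith)
  have hpi := Real.pi_pos
  have hA : ENNReal.ofReal (Real.Gamma γ * ∫ z in S, ‖z‖ ^ (-((n : ℝ) + 2 * s)))
      = ENNReal.ofReal (Real.pi ^ (((n : ℝ) - 1) / 2) * Real.Gamma ((1 + 2 * s) / 2)
          * (a ^ (-(2 * s)) / (2 * s))) := by
    rw [← integral_const_mul, ofReal_integral_eq_lintegral_ofReal (hInt.const_mul _)
      (.of_forall fun z => by positivity)]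
    calc ∫⁻ z in S, ENNReal.ofReal (Real.Gamma γ * ‖z‖ ^ (-((n : ℝ) + 2 * s)))
        = ∫⁻ z in S, ∫⁻ t in Set.Ioi (0 : ℝ),
            ENNReal.ofReal (t ^ (γ - 1) * Real.exp (-t * ‖z‖ ^ 2)) := by
          refine setLIntegral_congr_fun hSm (fun z hz => ?_)
          rw [key (hpos z hz) hγ0]
          congr 3
          rw [hγ]; ring
      _ = ∫⁻ t in Set.Ioi (0 : ℝ), ∫⁻ z in S,
            ENNReal.ofReal (t ^ (γ - 1) * Real.exp (-t * ‖z‖ ^ 2)) := by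
          rw [lintegral_lintegral_swap]
          fun_prop
      _ = ∫⁻ t in Set.Ioi (0 : ℝ), ∫⁻ w in Set.Ioi a,
            ENNReal.ofReal (Real.pi ^ (((n : ℝ) - 1) / 2)) *
            ENNReal.ofReal (t ^ ((1 + 2 * s) / 2 - 1) * Real.exp (-t * w ^ 2)) := by
          refine setLIntegral_congr_fun measurableSet_Ioi (fun t ht => ?_)
          have ht : 0 < t := ht
          rw [← ofReal_integral_eq_lintegral_ofReal
            ((integrableOn_gaussian_half a t ht).const_mul _)
            (.of_forall fun z => by positivity), integral_const_mul, integral_gaussian_half a t ht]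
          rw [lintegral_const_mul _ (by fun_prop), ← ofReal_integral_eq_lintegral_ofReal
            (((integrable_exp_neg_mul_sq ht).integrableOn).const_mul _)
            (.of_forall fun z => by positivity), integral_const_mul,
            ← ENNReal.ofReal_mul (by positivity)]
          congr 1
          rw [Real.div_rpow hpi.le ht.le, div_eq_mul_inv, ← Real.rpow_neg ht.le]
          have : t ^ ((1 + 2 * s) / 2 - 1) = t ^ (γ - 1) * t ^ (-(((n : ℝ) - 1) / 2)) := by
            rw [← Real.rpow_add ht]; congr 1; rw [hγ]; ring
          rw [this]; ring
      _ = ∫⁻ w in Set.Ioi a, ∫⁻ t in Set.Ioi (0 : ℝ),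
            ENNReal.ofReal (Real.pi ^ (((n : ℝ) - 1) / 2)) *
            ENNReal.ofReal (t ^ ((1 + 2 * s) / 2 - 1) * Real.exp (-t * w ^ 2)) := by
          rw [lintegral_lintegral_swap]
          fun_prop
      _ = ∫⁻ w in Set.Ioi a, ENNReal.ofReal (Real.pi ^ (((n : ℝ) - 1) / 2) *
            Real.Gamma ((1 + 2 * s) / 2) * w ^ (-(1 + 2 * s))) := by
          refine setLIntegral_congr_fun measurableSet_Ioi (fun w hw => ?_)
          have hw : 0 < w := ha.trans hw
          rw [lintegral_const_mul _ (by fun_prop), key hw (by linarith),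
            ← ENNReal.ofReal_mul (by positivity)]
          congr 1
          rw [mul_assoc]
          congr 3; ring
      _ = _ := by
          rw [← ofReal_integral_eq_lintegral_ofReal
            ((integrableOn_Ioi_rpow_of_lt (by linarith) ha).const_mul _), integral_const_mul,
            integral_Ioi_rpow_of_lt (by linarith) ha]
          · congr 2
            rw [show -(1 + 2 * s) + 1 = -(2 * s) by ring, neg_div_neg_eq]
          · filter_upwards [self_mem_ae_restrict measurableSet_Ioi] with w hw
            have : (0 : ℝ) < w := ha.trans hw
            positivity
  have hI0 : 0 ≤ ∫ z in S, ‖z‖ ^ (-((n : ℝ) + 2 * s)) :=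
    integral_nonneg fun z => by positivity
  rw [ENNReal.ofReal_eq_ofReal_iff (by positivity) (by positivity)] at hA
  rw [div_mul_eq_mul_div, eq_div_iff hGpos.ne', mul_comm, hA]

lemma cns_pos (hs : s ∈ Set.Ioo (0 : ℝ) 1) (m : ℕ) : 0 < cns m s := by
  have h1 := hs.1
  have h2 := Real.Gamma_pos_of_pos (show 0 < ((m : ℝ) + 2 * s) / 2 by positivity)
  have h3 := Real.Gamma_pos_of_pos (show 0 < 1 - s by linarith [hs.2])
  have := Real.pi_pos
  unfold cns
  positivity

/-- The zeroth-order coefficient `c_{1,s}/s · x₁^{-2s}` is `2 c_{n,s} ∫_{ℝⁿ₊} |x_* - y|^{-n-2s} dy`. -/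
lemma killing_eq (hs : s ∈ Set.Ioo (0 : ℝ) 1) {x : Euc n} (hx : 0 < x 0) :
    cns 1 s / s * (x 0) ^ (-(2 * s))
      = cns n s * (2 * ∫ y in halfSpace n, ‖reflFirst n x - y‖ ^ (-((n : ℝ) + 2 * s))) := by
  have h1 := hs.1
  have hG := Real.Gamma_pos_of_pos (show 0 < ((n : ℝ) + 2 * s) / 2 by positivity)
  have h3 := Real.Gamma_pos_of_pos (show 0 < 1 - s by linarith [hs.2])
  have hpi := Real.pi_pos
  have e : ∫ y in halfSpace n, ‖reflFirst n x - y‖ ^ (-((n : ℝ) + 2 * s))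
      = ∫ z in {z : Euc n | x 0 < z 0}, ‖z‖ ^ (-((n : ℝ) + 2 * s)) := by
    rw [← integral_indicator measurableSet_halfSpace,
      ← integral_indicator (isOpen_lt continuous_const (by fun_prop)).measurableSet,
      ← integral_add_left_eq_self _ (reflFirst n x)]
    congr 1
    ext z
    have hz : (reflFirst n x + z ∈ halfSpace n) ↔ (z ∈ {z : Euc n | x 0 < z 0}) := by
      simp [halfSpace, reflFirst_zero_coord]
    by_cases h : z ∈ {z : Euc n | x 0 < z 0}
    · rw [Set.indicator_of_mem h, Set.indicator_of_mem (hz.2 h)]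
      simp
    · rw [Set.indicator_of_notMem h, Set.indicator_of_notMem (fun h' => h (hz.1 h'))]
  rw [e, integral_half_norm_rpow h1 hx, cns, cns]
  have e2 : Real.pi ^ ((n : ℝ) / 2)
      = Real.pi ^ (((n : ℝ) - 1) / 2) * Real.pi ^ (((1 : ℕ) : ℝ) / 2) := by
    rw [← Real.rpow_add hpi]; congr 1; push_cast; ring
  rw [e2]
  have p1 : 0 < Real.pi ^ (((n : ℝ) - 1) / 2) := by positivity
  have p2 : 0 < Real.pi ^ (((1 : ℕ) : ℝ) / 2) := by positivity
  field_simp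
  push_cast
  ring

end Radial

/-! ### Integrability against the kernel, and the linear function `x₁` -/

section Linear

variable {n : ℕ} [NeZero n] {s : ℝ}

lemma preimage_sub_left_ball (x : Euc n) (ρ : ℝ) :
    (fun y => x - y) ⁻¹' (ball 0 ρ) = ball x ρ := by
  ext y; simp [dist_eq_norm, norm_sub_rev]

lemma integrableOn_compl_ball_kernel (x : Euc n) {q ρ : ℝ} (hq : q < -(n : ℝ)) (hρ : 0 < ρ) :
    IntegrableOn (fun y : Euc n => ‖x - y‖ ^ q) (ball x ρ)ᶜ := by
  have h := (Measure.measurePreserving_sub_left (volume : Measure (Euc n)) x).integrableOn_comp_preimage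
    (MeasurableEquiv.subLeft x).measurableEmbedding (f := fun z : Euc n => ‖z‖ ^ q)
    (s := (ball 0 ρ)ᶜ)
  have := h.2 (integrableOn_compl_ball_norm_rpow hq hρ)
  rwa [Set.preimage_compl, preimage_sub_left_ball] at this

lemma integral_compl_ball_kernel (x : Euc n) {q ρ : ℝ} (hq : q < -(n : ℝ)) (hρ : 0 < ρ) :
    ∫ y in (ball x ρ)ᶜ, ‖x - y‖ ^ q = sphereConst n * (ρ ^ ((n : ℝ) + q) / (-(n + q))) := by
  rw [← integral_compl_ball_norm_rpow hq hρ, ← preimage_sub_left_ball x ρ, ← Set.preimage_compl]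
  exact (Measure.measurePreserving_sub_left (volume : Measure (Euc n)) x).setIntegral_preimage_emb
    (MeasurableEquiv.subLeft x).measurableEmbedding (fun z : Euc n => ‖z‖ ^ q) _

lemma halfSpace_subset_compl_ball (x : Euc n) :
    halfSpace n ⊆ (ball (reflFirst n x) (x 0))ᶜ := by
  intro y hy
  have h := coord_add_le_norm x y
  have hy : 0 < y 0 := hy
  simp only [Set.mem_compl_iff, mem_ball, not_lt, dist_eq_norm]
  rw [norm_sub_rev]; linarith

lemma integrableOn_refl_kernel (hs : 0 < s) {x : Euc n} (hx : 0 < x 0) :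
    IntegrableOn (fun y : Euc n => ‖reflFirst n x - y‖ ^ (-((n : ℝ) + 2 * s))) (halfSpace n) :=
  (integrableOn_compl_ball_kernel _ (by linarith) hx).mono_set (halfSpace_subset_compl_ball x)

lemma not_mem_ball_ne {x y : Euc n} {ε : ℝ} (hε : 0 < ε) (h : y ∉ ball x ε) : x ≠ y := by
  rintro rfl; exact h (mem_ball_self hε)

lemma measurableSet_half_diff (x : Euc n) (ε : ℝ) :
    MeasurableSet (halfSpace n \ ball x ε) := measurableSet_halfSpace.diff measurableSet_ball

lemma integrableOn_aKernel (hs : 0 < s) {x : Euc n} (hx : 0 < x 0) {ε : ℝ} (hε : 0 < ε) :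
    IntegrableOn (fun y => aKernel n s x y) (halfSpace n \ ball x ε) := by
  have h := (integrableOn_compl_ball_kernel x (q := -((n : ℝ) + 2 * s)) (by linarith) hε).mono_set
    (fun y (hy : y ∈ halfSpace n \ ball x ε) => hy.2)
  refine Integrable.mono' h (measurable_aKernel x).aestronglyMeasurable ?_
  filter_upwards [self_mem_ae_restrict (measurableSet_half_diff x ε)] with y hy
  rw [Real.norm_of_nonneg (aKernel_nonneg hs hx hy.1 (not_mem_ball_ne hε hy.2))]
  exact aKernel_le x y

lemma integrableOn_aKernel_coord (hs : 0 < s) {x : Euc n} (hx : 0 < x 0) {ε : ℝ} (hε : 0 < ε) :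
    IntegrableOn (fun y => aKernel n s x y * y 0) (halfSpace n \ ball x ε) := by
  have h := ((integrableOn_compl_ball_kernel x (q := -((n : ℝ) + 2 * s))
    (by linarith) hε).mono_set
    (fun y (hy : y ∈ halfSpace n \ ball x ε) => hy.2)).const_mul (8 * (n + 2 * s) * x 0)
  refine Integrable.mono' h
    ((measurable_aKernel x).mul (by fun_prop)).aestronglyMeasurable ?_
  filter_upwards [self_mem_ae_restrict (measurableSet_half_diff x ε)] with y hy
  have hy0 : 0 < y 0 := hy.1
  have hne := not_mem_ball_ne hε hy.2
  rw [Real.norm_of_nonneg (mul_nonneg (aKernel_nonneg hs hx hy.1 hne) hy0.le)]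
  exact aKernel_mul_coord_le hs hx hy0 hne

/-- Folding an integral over `ℝⁿ` onto the half space. -/
lemma integral_eq_halfSpace_add {f : Euc n → ℝ} (hf : Integrable f) :
    ∫ y, f y = ∫ y in halfSpace n, (f y + f (reflFirst n y)) := by
  have hfr : Integrable (fun y => f (reflFirst n y)) :=
    (measurePreserving_reflFirst.integrable_comp_emb measurableEmbedding_reflFirst).2 hf
  rw [integral_add hf.integrableOn hfr.integrableOn,
    ← integral_add_compl measurableSet_halfSpace hf]
  congr 1
  have hnull : volume {y : Euc n | y 0 = 0} = 0 := by
    have h := Measure.addHaar_submodule (volume : Measure (Euc n))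
      ((EuclideanSpace.proj (0 : Fin n) : Euc n →L[ℝ] ℝ).toLinearMap.ker) (by
        intro h
        have : e1 n ∈ ((EuclideanSpace.proj (0 : Fin n) : Euc n →L[ℝ] ℝ).toLinearMap.ker) := by
          rw [h]; trivial
        simp at this)
    exact h
  have hae : ((halfSpace n)ᶜ : Set (Euc n)) =ᵐ[volume] (reflFirst n ⁻¹' (halfSpace n) : Set (Euc n)) := by
    have : ∀ᵐ y : Euc n, y 0 ≠ 0 := by
      rw [ae_iff]; simpa using hnull
    filter_upwards [this] with y hy
    apply propext
    change ¬ (0 < y 0) ↔ 0 < (reflFirst n y) 0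
    rw [reflFirst_zero_coord]
    constructor
    · intro h; have := lt_of_le_of_ne (not_lt.1 h) hy; linarith
    · intro h; linarith
  rw [setIntegral_congr_set hae]
  have := measurePreserving_reflFirst.setIntegral_preimage_emb measurableEmbedding_reflFirst
    (fun y => f (reflFirst n y)) (halfSpace n)
  simpa [reflFirst_reflFirst] using this

lemma volume_shell_le (x : Euc n) {a R : ℝ} (ha : 0 < a) (hR : a < R) :
    volume.real (ball x R \ ball x (R - a))
      ≤ sphereConst n * a * R ^ ((n : ℝ) - 1) := by
  have hR0 : 0 < R := ha.trans hR
  rw [measureReal_sdiff (ball_subset_ball (by linarith)) measurableSet_ball]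
  have hv : ∀ r : ℝ, 0 < r → volume.real (ball x r) = r ^ n * volume.real (ball (0 : Euc n) 1) := by
    intro r hr
    rw [Measure.real, Measure.real, Measure.addHaar_ball_of_pos _ _ hr, ENNReal.toReal_mul,
      ENNReal.toReal_ofReal (by positivity), finrank_euclideanSpace_fin]
  rw [hv R hR0, hv (R - a) (by linarith)]
  have hB := one_add_mul_le_pow (a := -(a / R)) (by
    have : a / R < 1 := (div_lt_one hR0).2 hR
    linarith) n
  have e : (R - a) ^ n = R ^ n * (1 + -(a / R)) ^ n := by
    rw [← mul_pow]; congr 1; field_simp; ring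
  have hRn : R ^ n = R * R ^ ((n : ℝ) - 1) := by
    nth_rewrite 2 [← Real.rpow_one R]
    rw [← Real.rpow_add hR0, ← Real.rpow_natCast]; congr 1; ring
  have hv0 : 0 ≤ volume.real (ball (0 : Euc n) 1) := measureReal_nonneg
  have h1 : R ^ n - (R - a) ^ n ≤ n * a * R ^ ((n : ℝ) - 1) := by
    rw [e]
    have : R ^ n * (1 + n * -(a / R)) ≤ R ^ n * (1 + -(a / R)) ^ n := by gcongr
    have e3 : R ^ n - R ^ n * (1 + n * -(a / R)) = n * a * R ^ ((n : ℝ) - 1) := by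
      rw [hRn]; field_simp; ring
    linarith
  calc _ = (R ^ n - (R - a) ^ n) * volume.real (ball (0 : Euc n) 1) := by ring
    _ ≤ (n * a * R ^ ((n : ℝ) - 1)) * volume.real (ball (0 : Euc n) 1) := by gcongr
    _ = _ := by rw [sphereConst]; ring

end Linear

section Linear
variable {n : ℕ} [NeZero n] {s : ℝ}

lemma fold_indicator_bound {a b ε R t F G p q : ℝ} (hG : 0 ≤ G) (hp : G ≤ p) (hq : R ≤ b → G ≤ q)
    (hp0 : 0 ≤ p) (hq0 : 0 ≤ q) (hab : a ≤ b) (hba : b ≤ a + 2 * t) (hεb : ε ≤ b) :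
    |(if a < R ∧ ε ≤ a then F + G else 0)
        - ((if a < R ∧ ε ≤ a then F else 0) + (if b < R ∧ ε ≤ b then G else 0))|
      ≤ (if a < ε then p else 0) + (if a < R ∧ R - 2 * t ≤ a then q else 0) := by
  rw [abs_le]
  constructor <;> split_ifs <;> grind

lemma annulus_J_bound (hs : 0 < s) {x : Euc n} (hx : 0 < x 0) {ε R : ℝ} (hε : 0 < ε)
    (hεx : ε < x 0) (hR : 2 * x 0 < R) :
    |∫ y in halfSpace n, (ball x R \ ball x ε).indicator
        (fun y => aKernel n s x y * (x 0 - y 0)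
          + 2 * x 0 * ‖reflFirst n x - y‖ ^ (-((n : ℝ) + 2 * s))) y|
      ≤ (x 0) ^ (1 - ((n : ℝ) + 2 * s)) * volume.real (ball x ε)
        + sphereConst n * (2 * x 0) * R ^ (-(2 * s)) := by
  classical
  set β : ℝ := (n : ℝ) + 2 * s with hβdef
  have hβ : 1 < β := beta_pos hs
  have hR0 : 0 < R := by linarith
  set A : Set (Euc n) := ball x R \ ball x ε with hA
  have hAm : MeasurableSet A := measurableSet_ball.diff measurableSet_ball
  set F : Euc n → ℝ := fun y => ‖x - y‖ ^ (-β) * (x 0 - y 0) with hF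
  have hFm : Measurable F := by fun_prop
  set f : Euc n → ℝ := A.indicator F with hf
  have hAfin : volume A ≠ ⊤ := ((measure_mono Set.sdiff_subset).trans_lt measure_ball_lt_top).ne
  have hfi : Integrable f := by
    rw [hf, integrable_indicator_iff hAm]
    refine Measure.integrableOn_of_bounded hAfin hFm.aestronglyMeasurable
      (M := ε ^ (-β) * R) ?_
    filter_upwards [self_mem_ae_restrict hAm] with y hy
    have h1 : ε ≤ ‖x - y‖ := by
      have := hy.2; simpa [dist_eq_norm, norm_sub_rev] using this
    have h2 : ‖x - y‖ ≤ R := by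
      have := hy.1; simp [dist_eq_norm, norm_sub_rev] at this; exact this.le
    have h3 : |x 0 - y 0| ≤ ‖x - y‖ := by simpa using abs_coord_le (x - y)
    rw [hF, norm_mul, Real.norm_of_nonneg (by positivity), Real.norm_eq_abs]
    gcongr ?_ * ?_
    · exact Real.rpow_le_rpow_of_nonpos hε h1 (by linarith)
    · linarith
  have hzero : ∫ y, f y = 0 := by
    have h1 := integral_sub_left_eq_self f volume (x + x)
    have h2 : ∀ y, f (x + x - y) = - f y := by
      intro y
      have e1 : x - (x + x - y) = -(x - y) := by abel
      have hmem : (x + x - y ∈ A) ↔ y ∈ A := by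
        have e2 : x + x - y - x = -(y - x) := by abel
        simp only [hA, Set.mem_sdiff, mem_ball, dist_eq_norm, e2, norm_neg]
      by_cases hy : y ∈ A
      · rw [hf, Set.indicator_of_mem hy, Set.indicator_of_mem (hmem.2 hy), hF]
        simp only [e1, norm_neg, PiLp.sub_apply, PiLp.add_apply]
        ring
      · rw [hf, Set.indicator_of_notMem hy, Set.indicator_of_notMem (mt hmem.1 hy)]; simp
    simp only [h2, integral_neg] at h1
    linarith
  set G : Euc n → ℝ := fun y => ‖reflFirst n x - y‖ ^ (-β) * (x 0 + y 0) with hG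
  have hGm : Measurable G := by fun_prop
  have hFr : ∀ y, F (reflFirst n y) = G y := by
    intro y
    simp only [hF, hG, reflFirst_zero_coord, norm_reflFirst_sub_comm x y]
    ring
  have hG1 : ∀ y ∈ halfSpace n, 0 ≤ G y ∧ G y ≤ ‖reflFirst n x - y‖ ^ (1 - β) ∧
      x 0 ≤ ‖reflFirst n x - y‖ := by
    intro y hy
    have hy : 0 < y 0 := hy
    have h := coord_add_le_norm x y
    have hb : 0 < ‖reflFirst n x - y‖ := by linarith
    refine ⟨by positivity, ?_, by linarith⟩
    rw [show 1 - β = -β + 1 by ring, Real.rpow_add_one hb.ne']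
    simp only [hG]; gcongr
  -- rewriting the integrand through the folding identity
  have hfold := integral_eq_halfSpace_add hfi
  rw [hzero] at hfold
  have hfr : Integrable (fun y => f (reflFirst n y)) :=
    (measurePreserving_reflFirst.integrable_comp_emb measurableEmbedding_reflFirst).2 hfi
  have hpt : ∀ y ∈ halfSpace n, ‖A.indicator (fun y => aKernel n s x y * (x 0 - y 0)
          + 2 * x 0 * ‖reflFirst n x - y‖ ^ (-β)) y - (f y + f (reflFirst n y))‖ ≤
        (ball x ε).indicator (fun _ => (x 0) ^ (1 - β)) y +
        (ball x R \ ball x (R - 2 * x 0)).indicator (fun _ => R ^ (1 - β)) y := by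
    intro y hy
    obtain ⟨g0, g1, g2⟩ := hG1 y hy
    have hy0 : 0 < y 0 := hy
    have hab := norm_sub_le_norm_reflFirst_sub hx hy0
    have hba : ‖reflFirst n x - y‖ ≤ ‖x - y‖ + 2 * x 0 := by
      have : reflFirst n x - y = (x - y) - (2 * x 0) • e1 n := by rw [reflFirst_eq]; abel
      rw [this]
      refine (norm_sub_le _ _).trans ?_
      rw [norm_smul, norm_e1, Real.norm_of_nonneg (by linarith), mul_one]
    have hJ : aKernel n s x y * (x 0 - y 0) + 2 * x 0 * ‖reflFirst n x - y‖ ^ (-β) = F y + G y := by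
      simp only [aKernel, hF, hG, ← hβdef]; ring
    have m1 : y ∈ A ↔ ‖x - y‖ < R ∧ ε ≤ ‖x - y‖ := by
      simp [hA, dist_eq_norm, norm_sub_rev]
    have m2 : reflFirst n y ∈ A ↔ ‖reflFirst n x - y‖ < R ∧ ε ≤ ‖reflFirst n x - y‖ := by
      rw [norm_reflFirst_sub_comm]
      simp [hA, dist_eq_norm, norm_sub_rev]
    have m3 : y ∈ ball x ε ↔ ‖x - y‖ < ε := by simp [dist_eq_norm, norm_sub_rev]
    have m4 : y ∈ ball x R \ ball x (R - 2 * x 0) ↔ ‖x - y‖ < R ∧ R - 2 * x 0 ≤ ‖x - y‖ := by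
      simp only [Set.mem_sdiff, mem_ball, dist_eq_norm, norm_sub_rev y x, not_lt]
    have p1 : 0 ≤ (x 0) ^ (1 - β) := by positivity
    have p2 : 0 ≤ R ^ (1 - β) := by positivity
    have hb0 : 0 < ‖reflFirst n x - y‖ := by linarith
    have q1 : ‖reflFirst n x - y‖ ^ (1 - β) ≤ (x 0) ^ (1 - β) :=
      Real.rpow_le_rpow_of_nonpos hx g2 (by linarith)
    have q2 : R ≤ ‖reflFirst n x - y‖ → ‖reflFirst n x - y‖ ^ (1 - β) ≤ R ^ (1 - β) :=
      fun h => Real.rpow_le_rpow_of_nonpos hR0 h (by linarith)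
    simp only [hf, Set.indicator_apply, hJ, hFr, m1, m2, m3, m4, Real.norm_eq_abs]
    exact fold_indicator_bound g0 (g1.trans q1) (fun h => g1.trans (q2 h)) p1 p2 hab hba
      (hεx.le.trans g2)
  have hFi : IntegrableOn (fun y => A.indicator (fun y => aKernel n s x y * (x 0 - y 0)
          + 2 * x 0 * ‖reflFirst n x - y‖ ^ (-β)) y) (halfSpace n) := by
    have h1 : IntegrableOn (A.indicator G) (halfSpace n) := by
      rw [IntegrableOn, integrable_indicator_iff hAm]
      refine Measure.integrableOn_of_bounded (M := (x 0) ^ (1 - β))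
        ((Measure.restrict_apply_le _ _).trans_lt hAfin.lt_top).ne hGm.aestronglyMeasurable ?_
      filter_upwards [ae_restrict_of_ae (self_mem_ae_restrict measurableSet_halfSpace)] with y hy
      obtain ⟨g0, g1, g2⟩ := hG1 y hy
      rw [Real.norm_of_nonneg g0]
      exact g1.trans (Real.rpow_le_rpow_of_nonpos hx g2 (by linarith))
    refine ((hfi.integrableOn (s := halfSpace n)).add h1).congr ?_
    filter_upwards with y
    by_cases hy : y ∈ A
    · simp only [hf, Pi.add_apply, Set.indicator_of_mem hy, aKernel, hF, hG, ← hβdef]; ring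
    · simp [hf, hy]
  have hsplit : (∫ y in halfSpace n, A.indicator (fun y => aKernel n s x y * (x 0 - y 0)
          + 2 * x 0 * ‖reflFirst n x - y‖ ^ (-β)) y)
      = ∫ y in halfSpace n, (A.indicator (fun y => aKernel n s x y * (x 0 - y 0)
          + 2 * x 0 * ‖reflFirst n x - y‖ ^ (-β)) y - (f y + f (reflFirst n y))) := by
    have h2 : IntegrableOn (fun y => f y + f (reflFirst n y)) (halfSpace n) :=
      hfi.integrableOn.add hfr.integrableOn
    rw [integral_sub hFi h2, ← hfold, sub_zero]
  rw [hsplit, ← Real.norm_eq_abs]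
  have hi1 : Integrable ((ball x ε).indicator (fun _ => (x 0) ^ (1 - β))) :=
    (integrable_indicator_iff measurableSet_ball).2 (integrableOn_const measure_ball_lt_top.ne)
  have hi2 : Integrable ((ball x R \ ball x (R - 2 * x 0)).indicator (fun _ => R ^ (1 - β))) :=
    (integrable_indicator_iff (measurableSet_ball.diff measurableSet_ball)).2
      (integrableOn_const ((measure_mono Set.sdiff_subset).trans_lt measure_ball_lt_top).ne)
  calc _ ≤ ∫ y in halfSpace n, ((ball x ε).indicator (fun _ => (x 0) ^ (1 - β)) y +
        (ball x R \ ball x (R - 2 * x 0)).indicator (fun _ => R ^ (1 - β)) y) := by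
        refine norm_integral_le_of_norm_le (hi1.add hi2).integrableOn ?_
        filter_upwards [self_mem_ae_restrict measurableSet_halfSpace] with y hy using hpt y hy
    _ ≤ ∫ y, ((ball x ε).indicator (fun _ => (x 0) ^ (1 - β)) y +
        (ball x R \ ball x (R - 2 * x 0)).indicator (fun _ => R ^ (1 - β)) y) := by
        refine setIntegral_le_integral (hi1.add hi2) (.of_forall fun y => ?_)
        exact add_nonneg (Set.indicator_nonneg (fun _ _ => by positivity) _)
          (Set.indicator_nonneg (fun _ _ => by positivity) _)
    _ = (x 0) ^ (1 - β) * volume.real (ball x ε) +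
        R ^ (1 - β) * volume.real (ball x R \ ball x (R - 2 * x 0)) := by
        rw [integral_add hi1 hi2, integral_indicator_const _ measurableSet_ball,
          integral_indicator_const _ (measurableSet_ball.diff measurableSet_ball)]
        simp only [smul_eq_mul]; ring
    _ ≤ _ := by
        refine add_le_add le_rfl ?_
        calc _ ≤ R ^ (1 - β) * (sphereConst n * (2 * x 0) * R ^ ((n : ℝ) - 1)) := by
              exact mul_le_mul_of_nonneg_left (volume_shell_le x (by linarith) hR) (by positivity)
          _ = sphereConst n * (2 * x 0) * (R ^ (1 - β) * R ^ ((n : ℝ) - 1)) := by ring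
          _ = _ := by rw [← Real.rpow_add hR0]; congr 2; rw [hβdef]; ring

lemma compl_ball_J_bound (hs : 0 < s) {x : Euc n} (hx : 0 < x 0) {ε : ℝ} (hε : 0 < ε)
    (hεx : ε < x 0) :
    |∫ y in halfSpace n \ ball x ε, (aKernel n s x y * (x 0 - y 0)
          + 2 * x 0 * ‖reflFirst n x - y‖ ^ (-((n : ℝ) + 2 * s)))|
      ≤ (x 0) ^ (1 - ((n : ℝ) + 2 * s)) * volume.real (ball x ε) := by
  set J : Euc n → ℝ := fun y => aKernel n s x y * (x 0 - y 0)
          + 2 * x 0 * ‖reflFirst n x - y‖ ^ (-((n : ℝ) + 2 * s)) with hJ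
  have hJi : IntegrableOn J (halfSpace n \ ball x ε) := by
    have h1 := ((integrableOn_aKernel (s := s) hs hx hε).mul_const (x 0)).sub
      (integrableOn_aKernel_coord hs hx hε)
    have h2 := ((integrableOn_refl_kernel hs hx).mono_set
      (Set.sdiff_subset (s := halfSpace n) (t := ball x ε))).const_mul (2 * x 0)
    refine (h1.add h2).congr (.of_forall fun y => ?_)
    simp only [hJ, Pi.add_apply, Pi.sub_apply]; ring
  have hlim : Tendsto (fun k : ℕ => ∫ y in (halfSpace n \ ball x ε) ∩ ball x k, J y) atTop
      (𝓝 (∫ y in halfSpace n \ ball x ε, J y)) := by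
    have hU : (⋃ k : ℕ, (halfSpace n \ ball x ε) ∩ ball x (k : ℝ)) = halfSpace n \ ball x ε := by
      rw [← Set.inter_iUnion, iUnion_ball_nat, Set.inter_univ]
    have := tendsto_setIntegral_of_monotone (μ := volume) (f := J)
      (s := fun k : ℕ => (halfSpace n \ ball x ε) ∩ ball x (k : ℝ))
      (fun k => (measurableSet_half_diff x ε).inter measurableSet_ball)
      (fun k l hkl => Set.inter_subset_inter_right _ (ball_subset_ball (by exact_mod_cast hkl)))
      (by rw [hU]; exact hJi)
    rwa [hU] at this
  have hbd : Tendsto (fun k : ℕ => (x 0) ^ (1 - ((n : ℝ) + 2 * s)) * volume.real (ball x ε)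
        + sphereConst n * (2 * x 0) * (k : ℝ) ^ (-(2 * s))) atTop
      (𝓝 ((x 0) ^ (1 - ((n : ℝ) + 2 * s)) * volume.real (ball x ε)
        + sphereConst n * (2 * x 0) * 0)) := by
    refine tendsto_const_nhds.add (Tendsto.const_mul _ ?_)
    exact (tendsto_rpow_neg_atTop (show 0 < 2 * s by linarith)).comp tendsto_natCast_atTop_atTop
  rw [mul_zero, add_zero] at hbd
  refine le_of_tendsto_of_tendsto hlim.abs hbd ?_
  filter_upwards [tendsto_natCast_atTop_atTop.eventually_gt_atTop (2 * x 0)] with k hk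
  have h := annulus_J_bound hs hx hε hεx hk
  have e : ∫ y in (halfSpace n \ ball x ε) ∩ ball x k, J y
      = ∫ y in halfSpace n, (ball x (k : ℝ) \ ball x ε).indicator J y := by
    rw [setIntegral_indicator (measurableSet_ball.diff measurableSet_ball)]
    congr 2
    ext y; simp only [Set.mem_inter_iff, Set.mem_sdiff]; tauto
  rw [e]; exact h

/-- The truncated operator applied to the linear function `y₁` tends to zero. -/
lemma hasAntiFracLap_coord (hs : s ∈ Set.Ioo (0 : ℝ) 1) {x : Euc n} (hx : 0 < x 0) :
    HasAntiFracLap n s (fun y => y 0) x 0 := by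
  have hs0 := hs.1
  set β : ℝ := (n : ℝ) + 2 * s with hβdef
  have hβ : 1 < β := beta_pos hs0
  have hc := cns_pos hs n
  have hvol : Tendsto (fun ε : ℝ => cns n s * (3 * ((x 0) ^ (1 - β) * volume.real (ball x ε))))
      (𝓝[>] 0) (𝓝 0) := by
    have h1 : Tendsto (fun ε : ℝ => cns n s * (3 * ((x 0) ^ (1 - β) *
        (ε ^ n * volume.real (ball (0 : Euc n) 1))))) (𝓝[>] 0) (𝓝 (cns n s * (3 * ((x 0) ^ (1 - β) *
        ((0 : ℝ) ^ n * volume.real (ball (0 : Euc n) 1)))))) := by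
      refine Tendsto.mono_left ?_ nhdsWithin_le_nhds
      exact Continuous.tendsto (by fun_prop) 0
    rw [zero_pow (NeZero.ne n)] at h1
    simp only [zero_mul, mul_zero] at h1
    refine h1.congr' ?_
    filter_upwards [self_mem_nhdsWithin] with ε hε
    have hε : 0 < ε := hε
    rw [Measure.real, Measure.real, Measure.addHaar_ball_of_pos _ _ hε, ENNReal.toReal_mul,
      ENNReal.toReal_ofReal (by positivity), finrank_euclideanSpace_fin]
  refine squeeze_zero_norm' ?_ hvol
  filter_upwards [Ioo_mem_nhdsGT hx] with ε hε
  obtain ⟨hε0, hεx⟩ := hε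
  have hJb := compl_ball_J_bound hs0 hx hε0 hεx
  have hk := killing_eq (n := n) hs hx
  have hri := integrableOn_refl_kernel (n := n) hs0 hx
  have hsub : halfSpace n \ ball x ε ⊆ halfSpace n := Set.sdiff_subset
  have hJs : ∫ y in halfSpace n \ ball x ε, (aKernel n s x y * (x 0 - y 0)
          + 2 * x 0 * ‖reflFirst n x - y‖ ^ (-β))
      = (∫ y in halfSpace n \ ball x ε, aKernel n s x y * (x 0 - y 0))
        + 2 * x 0 * ∫ y in halfSpace n \ ball x ε, ‖reflFirst n x - y‖ ^ (-β) := by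
    rw [integral_add, integral_const_mul]
    · refine (((integrableOn_aKernel (s := s) hs0 hx hε0).mul_const (x 0)).sub
        (integrableOn_aKernel_coord hs0 hx hε0)).congr (.of_forall fun y => ?_)
      simp only [Pi.sub_apply]; ring
    · exact (hri.mono_set hsub).const_mul _
  have hsplit := integral_inter_add_sdiff (measurableSet_ball (x := x) (ε := ε)) hri
  have hbb : |∫ y in halfSpace n ∩ ball x ε, ‖reflFirst n x - y‖ ^ (-β)|
      ≤ (x 0) ^ (-β) * volume.real (ball x ε) := by
    rw [← Real.norm_eq_abs]
    refine (norm_setIntegral_le_of_norm_le_const (C := (x 0) ^ (-β))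
      ((measure_mono Set.inter_subset_right).trans_lt measure_ball_lt_top) ?_).trans ?_
    · intro y hy
      have hy0 : 0 < y 0 := hy.1
      rw [Real.norm_of_nonneg (by positivity)]
      exact Real.rpow_le_rpow_of_nonpos hx (by linarith [coord_add_le_norm x y]) (by linarith)
    · gcongr
      · exact measure_ball_lt_top.ne
      · exact Set.inter_subset_right
  rw [← hβdef] at hk hsplit hJb
  have e : cns n s * (∫ y in halfSpace n \ ball x ε, aKernel n s x y * (x 0 - y 0)) +
        (cns 1 s / s) * x 0 * (x 0) ^ (-(2 * s))
      = cns n s * ((∫ y in halfSpace n \ ball x ε, (aKernel n s x y * (x 0 - y 0)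
          + 2 * x 0 * ‖reflFirst n x - y‖ ^ (-β)))
        + 2 * x 0 * ∫ y in halfSpace n ∩ ball x ε, ‖reflFirst n x - y‖ ^ (-β)) := by
    rw [mul_right_comm, hk, hJs, ← hsplit]; ring
  rw [e, norm_mul, Real.norm_of_nonneg hc.le]
  refine mul_le_mul_of_nonneg_left ?_ hc.le
  refine (norm_add_le _ _).trans ?_
  rw [Real.norm_eq_abs, Real.norm_eq_abs, abs_mul, abs_of_pos (show 0 < 2 * x 0 by linarith)]
  have e2 : (x 0) ^ (1 - β) = x 0 * (x 0) ^ (-β) := by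
    rw [sub_eq_add_neg, Real.rpow_add hx, Real.rpow_one]
  have := mul_le_mul_of_nonneg_left hbb (show 0 ≤ 2 * x 0 by linarith)
  rw [e2] at hJb ⊢
  linarith

end Linear

/-! ### The operator on `y₁ ξ(y)` for even `ξ` with bounded second differences -/

/-- A quantitative `C^{1,1}` condition: mixed second differences of `ξ` are bounded by
`A ‖v‖ ‖w‖`. -/
def MixedBound {E : Type*} [NormedAddCommGroup E] (ξ : E → ℝ) (A : ℝ) : Prop :=
  ∀ a v w : E, |ξ (a + v + w) - ξ (a + v) - ξ (a + w) + ξ a| ≤ A * ‖v‖ * ‖w‖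

section Operator

variable {n : ℕ} [NeZero n] {s : ℝ}

/-- The isometry fixing `x` that keeps the first coordinate and reflects the others about those
of `x`. -/
def sigma (x y : Euc n) : Euc n := (reflFirst n x + x) - reflFirst n y

lemma sigma_zero (x y : Euc n) : (sigma x y) 0 = y 0 := by
  simp [sigma, reflFirst_zero_coord]

lemma norm_sub_sigma (x y : Euc n) : ‖x - sigma x y‖ = ‖x - y‖ := by
  have : x - sigma x y = -(reflFirst n (x - y)) := by rw [sigma, reflFirst_sub]; abel
  rw [this, norm_neg, norm_reflFirst]

lemma norm_refl_sub_sigma (x y : Euc n) : ‖reflFirst n x - sigma x y‖ = ‖reflFirst n x - y‖ := by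
  have : reflFirst n x - sigma x y = -(x - reflFirst n y) := by rw [sigma]; abel
  rw [this, norm_neg, norm_reflFirst_sub_comm]

lemma aKernel_sigma (x y : Euc n) : aKernel n s x (sigma x y) = aKernel n s x y := by
  rw [aKernel, norm_sub_sigma, norm_refl_sub_sigma, aKernel]

lemma measurePreserving_sigma (x : Euc n) : MeasurePreserving (sigma x) volume volume :=
  (Measure.measurePreserving_sub_left (volume : Measure (Euc n)) (reflFirst n x + x)).comp
    measurePreserving_reflFirst

lemma measurableEmbedding_sigma (x : Euc n) : MeasurableEmbedding (sigma x) :=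
  (MeasurableEquiv.subLeft (reflFirst n x + x)).measurableEmbedding.comp
    measurableEmbedding_reflFirst

lemma setIntegral_symmetrize {φ : Euc n → Euc n} (hφ : MeasurePreserving φ volume volume)
    (hφe : MeasurableEmbedding φ) {D : Set (Euc n)} (hD : φ ⁻¹' D = D) {w g : Euc n → ℝ}
    (hw : ∀ y, w (φ y) = w y) (hi : IntegrableOn (fun y => w y * g y) D) :
    ∫ y in D, w y * g y = (1 / 2) * ∫ y in D, w y * (g y + g (φ y)) := by
  have h1 := hφ.setIntegral_preimage_emb hφe (fun y => w y * g y) D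
  have h2 : IntegrableOn (fun y => w y * g (φ y)) D := by
    have := (hφ.integrableOn_comp_preimage hφe (f := fun y => w y * g y) (s := D)).2 hi
    rw [hD] at this
    simpa [Function.comp_def, hw] using this
  rw [hD] at h1
  simp only [hw] at h1
  simp only [mul_add]
  rw [integral_add hi h2, h1]; ring

lemma norm_sub_coord_le (z : Euc n) : ‖z - z 0 • e1 n‖ ≤ ‖z‖ := by
  refine le_of_sq_le_sq ?_ (norm_nonneg _)
  rw [norm_sub_sq_real, real_inner_smul_right, real_inner_comm, inner_e1, norm_smul, norm_e1]
  simp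
  nlinarith [sq_nonneg (z 0)]

lemma central_diff_le {ξ : Euc n → ℝ} {A : ℝ} (hξ : MixedBound ξ A) (x y : Euc n) :
    |(ξ y - ξ x) + (ξ (x + x - y) - ξ x)| ≤ A * ‖x - y‖ ^ 2 := by
  have h := hξ (x + x - y) (y - x) (y - x)
  have e1 : x + x - y + (y - x) + (y - x) = y := by abel
  have e2 : x + x - y + (y - x) = x := by abel
  rw [e1, e2, norm_sub_rev y x] at h
  rw [show (ξ y - ξ x) + (ξ (x + x - y) - ξ x) = ξ y - ξ x - ξ x + ξ (x + x - y) by ring]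
  linarith [h]

lemma sigma_diff_le {ξ : Euc n → ℝ} {A : ℝ} (hA : 0 ≤ A) (hξ : MixedBound ξ A)
    (hev : ∀ y, ξ (reflFirst n y) = ξ y) {x : Euc n} (hx : 0 < x 0) (y : Euc n) :
    |(ξ y - ξ x) + (ξ (sigma x y) - ξ x)| ≤ A * (2 * ‖x - y‖ ^ 2 + 2 * x 0 * ‖x - y‖) := by
  set z := y - x with hz
  have hzn : ‖x - y‖ = ‖z‖ := norm_sub_rev _ _
  have hz0 : |z 0| ≤ ‖z‖ := abs_coord_le z
  have hσ : sigma x y = x + z 0 • e1 n - (z - z 0 • e1 n) := by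
    rw [sigma, reflFirst_eq, reflFirst_eq, hz]
    simp only [PiLp.sub_apply]; module
  have h1 := hξ (x + z 0 • e1 n - (z - z 0 • e1 n)) (z - z 0 • e1 n) (z - z 0 • e1 n)
  have e1' : x + z 0 • e1 n - (z - z 0 • e1 n) + (z - z 0 • e1 n) = x + z 0 • e1 n := by abel
  have e2 : x + z 0 • e1 n + (z - z 0 • e1 n) = y := by rw [hz]; abel
  rw [e1', e2, ← hσ] at h1
  have h2 := hξ (x - (2 * x 0 + z 0) • e1 n) (z 0 • e1 n) ((2 * x 0 + z 0) • e1 n)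
  have e3 : x - (2 * x 0 + z 0) • e1 n + z 0 • e1 n + (2 * x 0 + z 0) • e1 n = x + z 0 • e1 n := by
    abel
  have e4 : x - (2 * x 0 + z 0) • e1 n + z 0 • e1 n = reflFirst n x := by
    rw [reflFirst_eq]; module
  have e5 : x - (2 * x 0 + z 0) • e1 n + (2 * x 0 + z 0) • e1 n = x := by abel
  have e6 : x - (2 * x 0 + z 0) • e1 n = reflFirst n (x + z 0 • e1 n) := by
    rw [reflFirst_eq]; simp; module
  rw [e3, e4, e5, e6, hev, hev, norm_smul, norm_smul, norm_e1, mul_one, mul_one,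
    Real.norm_eq_abs, Real.norm_eq_abs] at h2
  have h3 : A * ‖z - z 0 • e1 n‖ * ‖z - z 0 • e1 n‖ ≤ A * ‖z‖ ^ 2 := by
    have := norm_sub_coord_le z
    rw [mul_assoc, ← pow_two]; gcongr
  have h4 : A * |z 0| * |2 * x 0 + z 0| ≤ A * ‖z‖ * (2 * x 0 + ‖z‖) := by
    gcongr
    refine (abs_add_le _ _).trans ?_
    rw [abs_of_pos (by linarith)]; linarith
  rw [hzn]
  have h5 : (ξ y - ξ x) + (ξ (sigma x y) - ξ x)
      = (ξ y - ξ (x + z 0 • e1 n) - ξ (x + z 0 • e1 n) + ξ (sigma x y))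
        + (ξ (x + z 0 • e1 n) - ξ x - ξ x + ξ (x + z 0 • e1 n)) := by ring
  rw [h5]
  refine (abs_add_le _ _).trans ?_
  nlinarith

/-- Pointwise bound for the symmetrised integrand, with the leading part `x₁|x-y|^{-β}` of the
weight `K y₁` removed near `x`. -/
lemma weight_bound (hs : 0 < s) {x y : Euc n} (hx : 0 < x 0) (hy : 0 < y 0) (hxy : x ≠ y)
    {ρ A M₀ G : ℝ} (hA : 0 ≤ A) (hG1 : |G| ≤ A * (2 * ‖x - y‖ ^ 2 + 2 * x 0 * ‖x - y‖))
    (hG2 : |G| ≤ 4 * M₀) (hM : 0 ≤ M₀) :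
    |(aKernel n s x y * y 0 - (ball x (min (x 0) ρ)).indicator
        (fun y => x 0 * ‖x - y‖ ^ (-((n : ℝ) + 2 * s))) y) * G|
      ≤ 32 * (n + 2 * s) * x 0 * ((ball x ρ).indicator
          (fun y => A * ‖x - y‖ ^ (2 - ((n : ℝ) + 2 * s))) y
        + ((ball x ρ)ᶜ).indicator (fun y => M₀ * ‖x - y‖ ^ (-((n : ℝ) + 2 * s))) y) := by
  set β : ℝ := (n : ℝ) + 2 * s with hβdef
  have hβ : 1 < β := beta_pos hs
  have ha : 0 < ‖x - y‖ := norm_pos_iff.2 (sub_ne_zero.2 hxy)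
  have hK := aKernel_nonneg hs hx hy hxy
  have hK2 := aKernel_mul_coord_le hs hx hy hxy
  rw [← hβdef] at hK2
  have hKy : 0 ≤ aKernel n s x y * y 0 := by positivity
  have hp : 0 < ‖x - y‖ ^ (-β) := by positivity
  have e2 : ‖x - y‖ ^ (2 - β) = ‖x - y‖ ^ (-β) * ‖x - y‖ ^ 2 := by
    rw [← Real.rpow_natCast, ← Real.rpow_add ha]; congr 1; push_cast; ring
  have hd : y ∈ ball x ρ ↔ ‖x - y‖ < ρ := by simp [dist_eq_norm, norm_sub_rev]
  have hd' : y ∈ ball x (min (x 0) ρ) ↔ ‖x - y‖ < x 0 ∧ ‖x - y‖ < ρ := by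
    simp [dist_eq_norm, norm_sub_rev]
  rw [abs_mul]
  by_cases c1 : ‖x - y‖ < ρ
  · have n1 : y ∉ (ball x ρ)ᶜ := fun h => h (hd.2 c1)
    rw [Set.indicator_of_mem (hd.2 c1), Set.indicator_of_notMem n1, add_zero]
    by_cases c2 : ‖x - y‖ < x 0
    · rw [Set.indicator_of_mem (hd'.2 ⟨c2, c1⟩)]
      have hab := norm_sub_le_norm_reflFirst_sub hx hy
      have hb : 0 < ‖reflFirst n x - y‖ := ha.trans_le hab
      have h1 : |x 0 - y 0| ≤ ‖x - y‖ := by simpa using abs_coord_le (x - y)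
      have h2 : ‖reflFirst n x - y‖ ^ (-β) * y 0 ≤ ‖x - y‖ ^ (-β) * ‖x - y‖ := by
        have hyb : y 0 ≤ ‖reflFirst n x - y‖ := by linarith [coord_add_le_norm x y]
        rw [← Real.rpow_add_one ha.ne']
        calc _ ≤ ‖reflFirst n x - y‖ ^ (-β) * ‖reflFirst n x - y‖ := by gcongr
          _ = ‖reflFirst n x - y‖ ^ (-β + 1) := by rw [← Real.rpow_add_one hb.ne']
          _ ≤ _ := Real.rpow_le_rpow_of_nonpos ha hab (by linarith)
      have h3 : |aKernel n s x y * y 0 - x 0 * ‖x - y‖ ^ (-β)| ≤ 2 * (‖x - y‖ ^ (-β) * ‖x - y‖) := by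
        have e : aKernel n s x y * y 0 - x 0 * ‖x - y‖ ^ (-β)
            = -(‖x - y‖ ^ (-β) * (x 0 - y 0)) - ‖reflFirst n x - y‖ ^ (-β) * y 0 := by
          rw [aKernel, ← hβdef]; ring
        rw [e]
        refine (abs_sub _ _).trans ?_
        rw [abs_neg, abs_mul, abs_of_pos hp,
          abs_of_nonneg (show 0 ≤ ‖reflFirst n x - y‖ ^ (-β) * y 0 by positivity)]
        have := mul_le_mul_of_nonneg_left h1 hp.le
        linarith
      have h4 : |G| ≤ 4 * A * x 0 * ‖x - y‖ := by
        refine hG1.trans ?_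
        have : ‖x - y‖ ^ 2 ≤ x 0 * ‖x - y‖ := by rw [pow_two]; gcongr
        nlinarith
      calc _ ≤ (2 * (‖x - y‖ ^ (-β) * ‖x - y‖)) * (4 * A * x 0 * ‖x - y‖) := by gcongr
        _ = 8 * (x 0 * (A * ‖x - y‖ ^ (2 - β))) := by rw [e2]; ring
        _ ≤ (32 * β) * (x 0 * (A * ‖x - y‖ ^ (2 - β))) := by gcongr; linarith
        _ = _ := by ring
    · have n2 : y ∉ ball x (min (x 0) ρ) := by rw [hd']; tauto
      rw [Set.indicator_of_notMem n2, sub_zero, abs_of_nonneg hKy]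
      have h4 : |G| ≤ 4 * A * ‖x - y‖ ^ 2 := by
        refine hG1.trans ?_
        have : x 0 * ‖x - y‖ ≤ ‖x - y‖ ^ 2 := by rw [pow_two]; gcongr; linarith
        nlinarith
      calc _ ≤ (8 * β * x 0 * ‖x - y‖ ^ (-β)) * (4 * A * ‖x - y‖ ^ 2) := by gcongr
        _ = _ := by rw [e2]; ring
  · have n1 : y ∉ ball x ρ := by rw [hd]; exact c1
    have n2 : y ∉ ball x (min (x 0) ρ) := by rw [hd']; tauto
    have n3 : y ∈ (ball x ρ)ᶜ := n1
    rw [Set.indicator_of_notMem n1, Set.indicator_of_mem n3, Set.indicator_of_notMem n2,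
      sub_zero, abs_of_nonneg hKy, zero_add]
    calc _ ≤ (8 * β * x 0 * ‖x - y‖ ^ (-β)) * (4 * M₀) := by gcongr
      _ = _ := by ring

lemma integrableOn_ball_kernel (x : Euc n) {q ρ : ℝ} (hq : -(n : ℝ) < q) :
    IntegrableOn (fun y : Euc n => ‖x - y‖ ^ q) (ball x ρ) := by
  have h := (Measure.measurePreserving_sub_left (volume : Measure (Euc n)) x).integrableOn_comp_preimage
    (MeasurableEquiv.subLeft x).measurableEmbedding (f := fun z : Euc n => ‖z‖ ^ q)
    (s := ball 0 ρ)
  have := h.2 (integrableOn_ball_norm_rpow hq)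
  rwa [preimage_sub_left_ball] at this

lemma integral_ball_kernel (x : Euc n) {q ρ : ℝ} (hq : -(n : ℝ) < q) (hρ : 0 < ρ) :
    ∫ y in ball x ρ, ‖x - y‖ ^ q = sphereConst n * (ρ ^ ((n : ℝ) + q) / (n + q)) := by
  rw [← integral_ball_norm_rpow hq hρ, ← preimage_sub_left_ball x ρ]
  exact (Measure.measurePreserving_sub_left (volume : Measure (Euc n)) x).setIntegral_preimage_emb
    (MeasurableEquiv.subLeft x).measurableEmbedding (fun z : Euc n => ‖z‖ ^ q) _

/-- The constant in the operator estimate. -/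
def opConst (n : ℕ) (s : ℝ) : ℝ :=
  32 * (n + 2 * s) * sphereConst n * (1 / (2 - 2 * s) + 1 / (2 * s))

lemma opConst_pos (hs : s ∈ Set.Ioo (0 : ℝ) 1) : 0 < opConst n s := by
  have h1 := hs.1
  have h2 : 0 < 2 - 2 * s := by linarith [hs.2]
  have := sphereConst_pos (n := n)
  unfold opConst; positivity

lemma operator_bound (hs : s ∈ Set.Ioo (0 : ℝ) 1) {ξ : Euc n → ℝ} {A M₀ : ℝ} (hA : 0 ≤ A)
    (hξm : Measurable ξ) (hξ : MixedBound ξ A) (hev : ∀ y, ξ (reflFirst n y) = ξ y)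
    (hM : ∀ y, |ξ y| ≤ M₀) {x : Euc n} (hx : 0 < x 0) {ε ρ : ℝ} (hε : 0 < ε) (hρ : 0 < ρ) :
    |∫ y in halfSpace n \ ball x ε, aKernel n s x y * y 0 * (ξ y - ξ x)|
      ≤ opConst n s * x 0 * (A * ρ ^ (2 - 2 * s) + M₀ * ρ ^ (-(2 * s))) := by
  have hs0 := hs.1
  have hs2 : 0 < 2 - 2 * s := by linarith [hs.2]
  have hM0 : 0 ≤ M₀ := (abs_nonneg _).trans (hM x)
  set β : ℝ := (n : ℝ) + 2 * s with hβdef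
  have hβ : 1 < β := beta_pos hs0
  set D := halfSpace n \ ball x ε with hD
  have hDm : MeasurableSet D := measurableSet_half_diff x ε
  set k₀ : Euc n → ℝ := (ball x (min (x 0) ρ)).indicator (fun y => x 0 * ‖x - y‖ ^ (-β)) with hk₀
  have hk₀m : Measurable k₀ := (by fun_prop : Measurable _).indicator measurableSet_ball
  have hg : ∀ y, |ξ y - ξ x| ≤ 2 * M₀ := fun y => (abs_sub _ _).trans (by linarith [hM x, hM y])
  have hk₀i : IntegrableOn k₀ D := by
    have h0 : IntegrableOn (fun y => ‖x - y‖ ^ (-β)) D :=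
      (integrableOn_compl_ball_kernel x (q := -β) (by linarith) hε).mono_set fun y hy => hy.2
    have h : IntegrableOn (fun y => x 0 * ‖x - y‖ ^ (-β)) D := h0.const_mul (x 0)
    exact h.indicator measurableSet_ball
  have hKi : IntegrableOn (fun y => aKernel n s x y * y 0) D := integrableOn_aKernel_coord hs0 hx hε
  have hmul : ∀ w : Euc n → ℝ, IntegrableOn w D → IntegrableOn (fun y => w y * (ξ y - ξ x)) D := by
    intro w hw
    refine Integrable.mul_bdd (c := 2 * M₀) hw (by fun_prop) (.of_forall fun y => ?_)
    exact hg y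
  have hsplit : ∫ y in D, aKernel n s x y * y 0 * (ξ y - ξ x)
      = (∫ y in D, (aKernel n s x y * y 0 - k₀ y) * (ξ y - ξ x)) + ∫ y in D, k₀ y * (ξ y - ξ x) := by
    rw [← integral_add (hmul (fun y => aKernel n s x y * y 0 - k₀ y) (hKi.sub hk₀i))
      (hmul _ hk₀i)]
    congr 1; ext y; ring
  have hσball : ∀ y r, sigma x y ∈ ball x r ↔ y ∈ ball x r := by
    intro y r
    simp only [mem_ball, dist_eq_norm]
    rw [norm_sub_rev, norm_sub_sigma, norm_sub_rev]
  have hσD : sigma x ⁻¹' D = D := by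
    ext y
    change ((0 < (sigma x y) 0) ∧ ¬ sigma x y ∈ ball x ε) ↔ ((0 < y 0) ∧ ¬ y ∈ ball x ε)
    rw [sigma_zero, hσball]
  have hk₀σ : ∀ y, k₀ (sigma x y) = k₀ y := by
    intro y
    by_cases hy : y ∈ ball x (min (x 0) ρ)
    · rw [hk₀, Set.indicator_of_mem hy, Set.indicator_of_mem ((hσball _ _).2 hy), norm_sub_sigma]
    · rw [hk₀, Set.indicator_of_notMem hy, Set.indicator_of_notMem (mt (hσball _ _).1 hy)]
  have hI1 := integrableOn_ball_kernel x (q := 2 - β) (ρ := ρ) (by rw [hβdef]; linarith)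
  have hI2 := integrableOn_compl_ball_kernel x (q := -β) (by linarith) hρ
  have hV1 := integral_ball_kernel x (q := 2 - β) (ρ := ρ) (by rw [hβdef]; linarith) hρ
  have hV2 := integral_compl_ball_kernel x (q := -β) (by linarith) hρ
  rw [show (n : ℝ) + (2 - β) = 2 - 2 * s by rw [hβdef]; ring] at hV1
  rw [show (n : ℝ) + -β = -(2 * s) by rw [hβdef]; ring, neg_neg] at hV2
  have hpart1 : |∫ y in D, (aKernel n s x y * y 0 - k₀ y) * (ξ y - ξ x)|
      ≤ (1 / 2) * (32 * β * x 0 * (A * (sphereConst n * (ρ ^ (2 - 2 * s) / (2 - 2 * s)))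
        + M₀ * (sphereConst n * (ρ ^ (-(2 * s)) / (2 * s))))) := by
    rw [setIntegral_symmetrize (w := fun y => aKernel n s x y * y 0 - k₀ y)
      (g := fun y => ξ y - ξ x) (measurePreserving_sigma x) (measurableEmbedding_sigma x) hσD
      (fun y => by simp only [aKernel_sigma, sigma_zero, hk₀σ]) (hmul _ (hKi.sub hk₀i)),
      abs_mul, abs_of_pos (by norm_num : (0 : ℝ) < 1 / 2)]
    refine mul_le_mul_of_nonneg_left ?_ (by norm_num)
    set B : Euc n → ℝ := fun y => 32 * β * x 0 * ((ball x ρ).indicator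
          (fun y => A * ‖x - y‖ ^ (2 - β)) y
        + ((ball x ρ)ᶜ).indicator (fun y => M₀ * ‖x - y‖ ^ (-β)) y) with hB
    have hB1 : Integrable ((ball x ρ).indicator (fun y => A * ‖x - y‖ ^ (2 - β))) :=
      (integrable_indicator_iff measurableSet_ball).2 (hI1.const_mul A)
    have hB2 : Integrable (((ball x ρ)ᶜ).indicator (fun y => M₀ * ‖x - y‖ ^ (-β))) :=
      (integrable_indicator_iff measurableSet_ball.compl).2 (hI2.const_mul M₀)
    have hBi : Integrable B := (hB1.add hB2).const_mul _
    have hB0 : ∀ y, 0 ≤ B y := fun y => mul_nonneg (by positivity) (add_nonneg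
      (Set.indicator_nonneg (fun _ _ => by positivity) _)
      (Set.indicator_nonneg (fun _ _ => by positivity) _))
    rw [← Real.norm_eq_abs]
    calc _ ≤ ∫ y in D, B y := by
          refine norm_integral_le_of_norm_le hBi.integrableOn ?_
          filter_upwards [self_mem_ae_restrict hDm] with y hy
          refine weight_bound hs0 hx hy.1 (not_mem_ball_ne hε hy.2) hA
            (sigma_diff_le hA hξ hev hx y) ?_ hM0
          exact (abs_add_le _ _).trans (by linarith [hg y, hg (sigma x y)])
      _ ≤ ∫ y, B y := setIntegral_le_integral hBi (.of_forall hB0)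
      _ = _ := by
          rw [hB, integral_const_mul, integral_add hB1 hB2, integral_indicator measurableSet_ball,
            integral_indicator measurableSet_ball.compl, integral_const_mul, integral_const_mul,
            hV1, hV2]
  have hpart2 : |∫ y in D, k₀ y * (ξ y - ξ x)|
      ≤ (1 / 2) * (x 0 * (A * (sphereConst n * (ρ ^ (2 - 2 * s) / (2 - 2 * s))))) := by
    set A' := ball x (min (x 0) ρ) \ ball x ε with hA'
    have hA'm : MeasurableSet A' := measurableSet_ball.diff measurableSet_ball
    have hsub : A' ⊆ D := by
      intro y hy
      refine ⟨?_, hy.2⟩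
      have h1 : ‖x - y‖ < x 0 := by
        have := hy.1
        rw [mem_ball, dist_eq_norm, norm_sub_rev] at this
        exact this.trans_le (min_le_left _ _)
      have h2 : |x 0 - y 0| ≤ ‖x - y‖ := by simpa using abs_coord_le (x - y)
      change 0 < y 0
      linarith [(abs_le.1 h2).2]
    have e : ∫ y in D, k₀ y * (ξ y - ξ x) = ∫ y in A', k₀ y * (ξ y - ξ x) := by
      refine setIntegral_eq_of_subset_of_forall_sdiff_eq_zero hDm hsub ?_
      intro y hy
      have : y ∉ ball x (min (x 0) ρ) := fun h => hy.2 ⟨h, hy.1.2⟩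
      rw [hk₀, Set.indicator_of_notMem this, zero_mul]
    have hcball : ∀ y r, x + x - y ∈ ball x r ↔ y ∈ ball x r := by
      intro y r
      have e2 : x + x - y - x = -(y - x) := by abel
      simp only [mem_ball, dist_eq_norm, e2, norm_neg]
    have hcD : (fun y => x + x - y) ⁻¹' A' = A' := by
      ext y; simp only [hA', Set.mem_preimage, Set.mem_sdiff, hcball]
    have hk₀c : ∀ y, k₀ (x + x - y) = k₀ y := by
      intro y
      by_cases hy : y ∈ ball x (min (x 0) ρ)
      · rw [hk₀, Set.indicator_of_mem hy, Set.indicator_of_mem ((hcball _ _).2 hy),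
          show x - (x + x - y) = -(x - y) by abel, norm_neg]
      · rw [hk₀, Set.indicator_of_notMem hy, Set.indicator_of_notMem (mt (hcball _ _).1 hy)]
    rw [e, setIntegral_symmetrize (w := k₀) (g := fun y => ξ y - ξ x)
      (Measure.measurePreserving_sub_left (volume : Measure (Euc n)) (x + x))
      (MeasurableEquiv.subLeft (x + x)).measurableEmbedding hcD hk₀c
      ((hmul _ hk₀i).mono_set hsub), abs_mul, abs_of_pos (by norm_num : (0 : ℝ) < 1 / 2)]
    refine mul_le_mul_of_nonneg_left ?_ (by norm_num)
    have hB : IntegrableOn (fun y => x 0 * (A * ‖x - y‖ ^ (2 - β))) (ball x ρ) :=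
      (hI1.const_mul A).const_mul _
    have hA'ρ : A' ⊆ ball x ρ := fun y hy => ball_subset_ball (min_le_right _ _) hy.1
    rw [← Real.norm_eq_abs]
    calc _ ≤ ∫ y in A', x 0 * (A * ‖x - y‖ ^ (2 - β)) := by
          refine norm_integral_le_of_norm_le (hB.mono_set hA'ρ) ?_
          filter_upwards [self_mem_ae_restrict hA'm] with y hy
          have ha : 0 < ‖x - y‖ := norm_pos_iff.2 (sub_ne_zero.2 (not_mem_ball_ne hε hy.2))
          have e2 : ‖x - y‖ ^ (2 - β) = ‖x - y‖ ^ (-β) * ‖x - y‖ ^ 2 := by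
            rw [← Real.rpow_natCast, ← Real.rpow_add ha]; congr 1; push_cast; ring
          rw [norm_mul, hk₀, Set.indicator_of_mem hy.1, Real.norm_of_nonneg (by positivity),
            Real.norm_eq_abs, e2]
          calc _ ≤ x 0 * ‖x - y‖ ^ (-β) * (A * ‖x - y‖ ^ 2) := by
                gcongr; exact central_diff_le hξ x y
            _ = _ := by ring
      _ ≤ ∫ y in ball x ρ, x 0 * (A * ‖x - y‖ ^ (2 - β)) :=
          setIntegral_mono_set hB (.of_forall fun y => by positivity) (.of_forall hA'ρ)
      _ = _ := by rw [integral_const_mul, integral_const_mul, hV1]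
  rw [hsplit]
  refine (abs_add_le _ _).trans ((add_le_add hpart1 hpart2).trans ?_)
  have hσp := sphereConst_pos (n := n)
  set P := ρ ^ (2 - 2 * s) with hP
  set Q := ρ ^ (-(2 * s)) with hQ
  have hP0 : 0 < P := by positivity
  have hQ0 : 0 < Q := by positivity
  have hXY : opConst n s * x 0 * (A * P + M₀ * Q)
      - ((1 / 2) * (32 * β * x 0 * (A * (sphereConst n * (P / (2 - 2 * s)))
        + M₀ * (sphereConst n * (Q / (2 * s)))))
        + (1 / 2) * (x 0 * (A * (sphereConst n * (P / (2 - 2 * s))))))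
      = x 0 * sphereConst n * (A * P * (1 / (2 - 2 * s)) * (16 * β - 1 / 2)
        + M₀ * Q * (1 / (2 * s)) * (16 * β)
        + 32 * β * (A * P * (1 / (2 * s)) + M₀ * Q * (1 / (2 - 2 * s)))) := by
    rw [opConst, ← hβdef]; ring
  have : 0 ≤ 16 * β - 1 / 2 := by linarith
  have h0 : 0 ≤ x 0 * sphereConst n * (A * P * (1 / (2 - 2 * s)) * (16 * β - 1 / 2)
        + M₀ * Q * (1 / (2 * s)) * (16 * β)
        + 32 * β * (A * P * (1 / (2 * s)) + M₀ * Q * (1 / (2 - 2 * s)))) := by positivity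
  linarith

end Operator

/-! ### Truncated operator, weighted kernel bounds and the far-field gain -/

/-- The truncation at scale `ε` of the antisymmetric fractional Laplacian, whose limit as
`ε → 0⁺` is prescribed by `HasAntiFracLap`. -/
def truncOp (n : ℕ) [NeZero n] (s : ℝ) (u : Euc n → ℝ) (x : Euc n) (ε : ℝ) : ℝ :=
  cns n s * (∫ y in halfSpace n \ Metric.ball x ε, aKernel n s x y * (u x - u y)) +
    (cns 1 s / s) * u x * (x 0) ^ (-(2 * s))

section Far

variable {n : ℕ} [NeZero n] {s : ℝ}

lemma integrableOn_aKernel_coord_mul (hs : 0 < s) {ξ : Euc n → ℝ} {M₀ : ℝ}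
    (hξm : Measurable ξ) (hM : ∀ y, |ξ y| ≤ M₀) {x : Euc n} (hx : 0 < x 0) {ε : ℝ} (hε : 0 < ε) :
    IntegrableOn (fun y => aKernel n s x y * (y 0 * ξ y)) (halfSpace n \ ball x ε) := by
  have h : IntegrableOn (fun y => aKernel n s x y * y 0 * ξ y) (halfSpace n \ ball x ε) :=
    Integrable.mul_bdd (c := M₀) (integrableOn_aKernel_coord hs hx hε) (by fun_prop)
      (.of_forall fun y => hM y)
  refine h.congr (.of_forall fun y => ?_)
  simp only; ring

lemma truncOp_coord_mul (hs : s ∈ Set.Ioo (0 : ℝ) 1) {ξ : Euc n → ℝ} {A M₀ : ℝ} (hA : 0 ≤ A)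
    (hξm : Measurable ξ) (hξ : MixedBound ξ A) (hev : ∀ y, ξ (reflFirst n y) = ξ y)
    (hM : ∀ y, |ξ y| ≤ M₀) {x : Euc n} (hx : 0 < x 0) {ε ρ : ℝ} (hε : 0 < ε) (hρ : 0 < ρ) :
    |truncOp n s (fun y => y 0 * ξ y) x ε - ξ x * truncOp n s (fun y => y 0) x ε|
      ≤ cns n s * (opConst n s * x 0 * (A * ρ ^ (2 - 2 * s) + M₀ * ρ ^ (-(2 * s)))) := by
  have hs0 := hs.1
  have h := operator_bound hs hA hξm hξ hev hM hx hε hρ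
  have hc := cns_pos hs n
  have i1 := integrableOn_aKernel (n := n) hs0 hx hε
  have i2 := integrableOn_aKernel_coord (n := n) hs0 hx hε
  have i3 := integrableOn_aKernel_coord_mul hs0 hξm hM hx hε
  have e1 : (∫ y in halfSpace n \ ball x ε, aKernel n s x y * (x 0 * ξ x - y 0 * ξ y))
      = ξ x * (∫ y in halfSpace n \ ball x ε, aKernel n s x y * (x 0 - y 0))
        - ∫ y in halfSpace n \ ball x ε, aKernel n s x y * y 0 * (ξ y - ξ x) := by
    rw [← integral_const_mul, ← integral_sub]
    · congr 1; ext y; ring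
    · refine (((i1.mul_const (x 0)).sub i2).const_mul (ξ x)).congr (.of_forall fun y => ?_)
      simp only [Pi.sub_apply]; ring
    · refine (i3.sub (i2.mul_const (ξ x))).congr (.of_forall fun y => ?_)
      simp only [Pi.sub_apply]; ring
  have e2 : truncOp n s (fun y => y 0 * ξ y) x ε - ξ x * truncOp n s (fun y => y 0) x ε
      = -(cns n s * ∫ y in halfSpace n \ ball x ε, aKernel n s x y * y 0 * (ξ y - ξ x)) := by
    simp only [truncOp, e1]; ring
  rw [e2, abs_neg, abs_mul, abs_of_pos hc]
  exact mul_le_mul_of_nonneg_left h hc.le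

/-- The weight of the space `𝒜ₛ`. -/
def aWeight (n : ℕ) [NeZero n] (s : ℝ) (y : Euc n) : ℝ := y 0 / (1 + ‖y‖ ^ ((n : ℝ) + 2 * s + 2))

/-- Constant in the upper bound of the kernel by the weight on `|x| ≤ R`. -/
def kUp (n : ℕ) (s R : ℝ) : ℝ := 2 * (n + 2 * s) * (1 + (R + 1) ^ ((n : ℝ) + 2 * s + 2))

/-- Constant in the lower bound of the kernel by the weight on `|x| ≤ R`. -/
def kLow (n : ℕ) (s R : ℝ) : ℝ := 2 * (n + 2 * s) * (2 * (R + 1)) ^ (-((n : ℝ) + 2 * s) - 2)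

lemma kUp_pos (hs : 0 < s) {R : ℝ} (hR : 0 ≤ R) : 0 < kUp n s R := by
  have := beta_pos (n := n) hs; unfold kUp; positivity

lemma kLow_pos (hs : 0 < s) {R : ℝ} (hR : 0 ≤ R) : 0 < kLow n s R := by
  have := beta_pos (n := n) hs; unfold kLow; positivity

lemma measurable_aWeight : Measurable (aWeight n s) := by unfold aWeight; fun_prop

lemma aWeight_nonneg {y : Euc n} (hy : 0 < y 0) : 0 ≤ aWeight n s y := by
  unfold aWeight; positivity

lemma aKernel_le_weight (hs : 0 < s) {R r : ℝ} (hr : 0 < r) (hr1 : r ≤ 1) {x y : Euc n}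
    (hx : 0 < x 0) (hxR : ‖x‖ ≤ R) (hy : y ∈ halfSpace n \ ball x r) :
    aKernel n s x y ≤ kUp n s R * x 0 * r ^ (-((n : ℝ) + 2 * s) - 2) * aWeight n s y := by
  have hy0 : 0 < y 0 := hy.1
  set β : ℝ := (n : ℝ) + 2 * s with hβdef
  have hβ : 1 < β := beta_pos hs
  have hR : 0 ≤ R := (norm_nonneg _).trans hxR
  have hne := not_mem_ball_ne hr hy.2
  have hra : r ≤ ‖x - y‖ := by
    have := hy.2; rw [mem_ball, not_lt, dist_eq_norm, norm_sub_rev] at this; exact this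
  have ha : 0 < ‖x - y‖ := hr.trans_le hra
  have hK := (aKernel_bounds hs hx hy0 hne).2
  rw [← hβdef] at hK
  refine hK.trans ?_
  have h1 : 1 ≤ ‖x - y‖ / r := (one_le_div hr).2 hra
  have h2 : ‖y‖ ≤ (R + 1) * (‖x - y‖ / r) := by
    have e1 : ‖y‖ ≤ ‖x‖ + ‖x - y‖ := by
      have : y = x - (x - y) := by abel
      calc ‖y‖ = ‖x - (x - y)‖ := by rw [← this]
        _ ≤ _ := norm_sub_le _ _
    have e2 : ‖x - y‖ ≤ ‖x - y‖ / r := le_div_self ha.le hr hr1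
    nlinarith
  have h3 : 1 + ‖y‖ ^ (β + 2) ≤ (1 + (R + 1) ^ (β + 2)) * (‖x - y‖ / r) ^ (β + 2) := by
    have e1 : (1 : ℝ) ≤ (‖x - y‖ / r) ^ (β + 2) := Real.one_le_rpow h1 (by linarith)
    have e2 : ‖y‖ ^ (β + 2) ≤ (R + 1) ^ (β + 2) * (‖x - y‖ / r) ^ (β + 2) := by
      rw [← Real.mul_rpow (by linarith) (by positivity)]
      exact Real.rpow_le_rpow (norm_nonneg _) h2 (by linarith)
    linarith
  have h4 : (‖x - y‖ / r) ^ (β + 2) = r ^ (-β - 2) / ‖x - y‖ ^ (-β - 2) := by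
    rw [Real.div_rpow ha.le hr.le, show -β - 2 = -(β + 2) by ring, Real.rpow_neg hr.le,
      Real.rpow_neg ha.le]
    field_simp
  have hp : 0 < ‖x - y‖ ^ (-β - 2) := by positivity
  have hW : 0 < 1 + ‖y‖ ^ (β + 2) := by positivity
  have h5 : ‖x - y‖ ^ (-β - 2) ≤ (1 + (R + 1) ^ (β + 2)) * r ^ (-β - 2) / (1 + ‖y‖ ^ (β + 2)) := by
    rw [le_div_iff₀ hW]
    calc _ ≤ ‖x - y‖ ^ (-β - 2) * ((1 + (R + 1) ^ (β + 2)) * (‖x - y‖ / r) ^ (β + 2)) := by gcongr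
      _ = _ := by rw [h4]; field_simp
  calc _ ≤ 2 * β * (x 0 * y 0) * ((1 + (R + 1) ^ (β + 2)) * r ^ (-β - 2) / (1 + ‖y‖ ^ (β + 2))) := by
        gcongr
    _ = _ := by rw [kUp, aWeight, ← hβdef]; ring

lemma weight_le_aKernel (hs : 0 < s) {R : ℝ} {x y : Euc n}
    (hx : 0 < x 0) (hxR : ‖x‖ ≤ R) (hy : 0 < y 0) (hxy : x ≠ y) :
    kLow n s R * x 0 * aWeight n s y ≤ aKernel n s x y := by
  set β : ℝ := (n : ℝ) + 2 * s with hβdef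
  have hβ : 1 < β := beta_pos hs
  have hR : 0 ≤ R := (norm_nonneg _).trans hxR
  have hK := (aKernel_bounds hs hx hy hxy).1
  rw [← hβdef] at hK
  refine le_trans ?_ hK
  set b := ‖reflFirst n x - y‖ with hb
  have hb0 : 0 < b := by linarith [coord_add_le_norm x y]
  have h1 : b ≤ (R + 1) * (1 + ‖y‖) := by
    have : b ≤ ‖x‖ + ‖y‖ := by rw [← norm_reflFirst x]; exact norm_sub_le _ _
    nlinarith [norm_nonneg y]
  have h2 : b ≤ 2 * (R + 1) * max 1 ‖y‖ := by
    have := le_max_left 1 ‖y‖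
    have := le_max_right 1 ‖y‖
    nlinarith
  have hmax : (max 1 ‖y‖) ^ (β + 2) ≤ 1 + ‖y‖ ^ (β + 2) := by
    rcases le_total 1 ‖y‖ with h | h
    · rw [max_eq_right h]; linarith
    · rw [max_eq_left h, Real.one_rpow]; linarith [Real.rpow_nonneg (norm_nonneg y) (β + 2)]
  have hW : 0 < 1 + ‖y‖ ^ (β + 2) := by positivity
  have h3 : (2 * (R + 1)) ^ (-β - 2) / (1 + ‖y‖ ^ (β + 2)) ≤ b ^ (-β - 2) := by
    have e1 : (2 * (R + 1) * max 1 ‖y‖) ^ (-β - 2) ≤ b ^ (-β - 2) :=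
      Real.rpow_le_rpow_of_nonpos hb0 h2 (by linarith)
    refine le_trans ?_ e1
    have hm : 0 < max 1 ‖y‖ := lt_max_of_lt_left one_pos
    rw [Real.mul_rpow (by linarith) hm.le, div_eq_mul_inv]
    refine mul_le_mul_of_nonneg_left ?_ (by positivity)
    rw [show -β - 2 = -(β + 2) by ring, Real.rpow_neg hm.le]
    exact inv_anti₀ (by positivity) hmax
  calc _ = 2 * β * (x 0 * y 0) * ((2 * (R + 1)) ^ (-β - 2) / (1 + ‖y‖ ^ (β + 2))) := by
        rw [kLow, aWeight, ← hβdef]; ring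
    _ ≤ _ := by gcongr

lemma MemA.integrableOn_weight {u : Euc n → ℝ} (hu : MemA n s u) :
    IntegrableOn (fun y => aWeight n s y * u y) (halfSpace n) := by
  have h := hu.2.2
  refine Integrable.mono' h (measurable_aWeight.aestronglyMeasurable.mul
    hu.2.1.aestronglyMeasurable.restrict) ?_
  filter_upwards [self_mem_ae_restrict measurableSet_halfSpace] with y hy
  rw [norm_mul, Real.norm_of_nonneg (aWeight_nonneg hy), Real.norm_eq_abs, aWeight]
  apply le_of_eq; ring

lemma ANorm_eq {u : Euc n → ℝ} (hu : ∀ x ∈ halfSpace n, 0 ≤ u x) :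
    ANorm n s u = ∫ y in halfSpace n, aWeight n s y * u y := by
  refine setIntegral_congr_fun measurableSet_halfSpace fun y hy => ?_
  simp only [aWeight, abs_of_nonneg (hu y hy)]; ring

lemma ANorm_nonneg (u : Euc n → ℝ) : 0 ≤ ANorm n s u := by
  refine setIntegral_nonneg measurableSet_halfSpace fun y hy => ?_
  have hy : 0 < y 0 := hy
  positivity

lemma integrableOn_aKernel_mul (hs : 0 < s) {u : Euc n → ℝ} (hu : MemA n s u) {x : Euc n}
    (hx : 0 < x 0) {ε : ℝ} (hε : 0 < ε) :
    IntegrableOn (fun y => aKernel n s x y * u y) (halfSpace n \ ball x ε) := by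
  set r := min ε 1 with hr
  have hr0 : 0 < r := lt_min hε one_pos
  have hsub : halfSpace n \ ball x ε ⊆ halfSpace n \ ball x r :=
    Set.sdiff_subset_sdiff_right (ball_subset_ball (min_le_left _ _))
  refine IntegrableOn.mono_set ?_ hsub
  have hw : IntegrableOn (fun y => aWeight n s y * u y) (halfSpace n \ ball x r) :=
    hu.integrableOn_weight.mono_set Set.sdiff_subset
  refine Integrable.mono' (hw.norm.const_mul (kUp n s ‖x‖ * x 0 * r ^ (-((n : ℝ) + 2 * s) - 2)))
    ((measurable_aKernel x).aestronglyMeasurable.mul hu.2.1.aestronglyMeasurable.restrict) ?_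
  filter_upwards [self_mem_ae_restrict (measurableSet_half_diff x r)] with y hy
  have hy0 : 0 < y 0 := hy.1
  have h1 := aKernel_le_weight hs hr0 (min_le_right _ _) hx le_rfl hy
  rw [norm_mul, norm_mul, Real.norm_of_nonneg (aWeight_nonneg hy0),
    Real.norm_of_nonneg (aKernel_nonneg hs hx hy0 (not_mem_ball_ne hr0 hy.2)), ← mul_assoc]
  gcongr

lemma integral_aKernel_mul_le (hs : 0 < s) {u : Euc n → ℝ} (hu : MemA n s u)
    (hu0 : ∀ x ∈ halfSpace n, 0 ≤ u x) {x : Euc n} (hx : 0 < x 0) {R r : ℝ} (hr : 0 < r)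
    (hr1 : r ≤ 1) (hxR : ‖x‖ ≤ R) :
    ∫ y in halfSpace n \ ball x r, aKernel n s x y * u y
      ≤ kUp n s R * x 0 * r ^ (-((n : ℝ) + 2 * s) - 2) * ANorm n s u := by
  have hR : 0 ≤ R := (norm_nonneg _).trans hxR
  have hk := kUp_pos (n := n) hs hR
  have hw := hu.integrableOn_weight
  rw [ANorm_eq hu0, ← integral_const_mul]
  calc _ ≤ ∫ y in halfSpace n \ ball x r, kUp n s R * x 0 * r ^ (-((n : ℝ) + 2 * s) - 2)
          * (aWeight n s y * u y) := by
        refine setIntegral_mono_on (integrableOn_aKernel_mul hs hu hx hr)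
          ((hw.mono_set Set.sdiff_subset).const_mul _) (measurableSet_half_diff x r) fun y hy => ?_
        rw [← mul_assoc]
        exact mul_le_mul_of_nonneg_right (aKernel_le_weight hs hr hr1 hx hxR hy) (hu0 y hy.1)
    _ ≤ _ := by
        refine setIntegral_mono_set (hw.const_mul _) ?_ (.of_forall Set.sdiff_subset)
        filter_upwards [self_mem_ae_restrict measurableSet_halfSpace] with y hy
        have := hu0 y hy
        have := aWeight_nonneg (s := s) hy
        simp only [Pi.zero_apply]
        positivity

/-- Constant in the far-field gain. -/
def gainConst (n : ℕ) (s : ℝ) : ℝ :=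
  2 * (n + 2 * s) * 8 ^ (-(((n : ℝ) + 2 * s) / 2) - 1) * (2⁻¹ ^ n * volume.real (ball (0 : Euc n) 1))

lemma gainConst_pos (hs : 0 < s) : 0 < gainConst n s := by
  have := beta_pos (n := n) hs
  have : 0 < volume.real (ball (0 : Euc n) 1) :=
    ENNReal.toReal_pos (measure_ball_pos _ _ one_pos).ne' measure_ball_lt_top.ne
  unfold gainConst; positivity

/-- On the ball of radius `r/2` about `x + (3r/2)e₁`, which lies in the half space at distance
at least `r` from `x`, the product `K y₁` is at least of order `x₁ r^{-n-2s}`. -/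
lemma gain_pointwise (hs : 0 < s) {x y : Euc n} (hx : 0 < x 0) {r : ℝ} (hr : 0 < r)
    (hy : y ∈ ball (x + (3 / 2 * r) • e1 n) (r / 2)) :
    y ∈ halfSpace n \ ball x r ∧ y 0 ≤ x 0 + 2 * r ∧
      2 * (n + 2 * s) * 8 ^ (-(((n : ℝ) + 2 * s) / 2) - 1) * x 0 * r ^ (-((n : ℝ) + 2 * s))
        ≤ aKernel n s x y * y 0 := by
  set β : ℝ := (n : ℝ) + 2 * s with hβdef
  have hβ : 1 < β := beta_pos hs
  rw [mem_ball, dist_eq_norm] at hy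
  have hc := (abs_coord_le (y - (x + (3 / 2 * r) • e1 n))).trans hy.le
  have e0 : (y - (x + (3 / 2 * r) • e1 n)) 0 = y 0 - x 0 - 3 / 2 * r := by
    simp; ring
  rw [e0, abs_le] at hc
  have hy1 : x 0 + r ≤ y 0 := by linarith
  have hy2 : y 0 ≤ x 0 + 2 * r := by linarith
  have hy0 : 0 < y 0 := by linarith
  have ha1 : r ≤ ‖x - y‖ := by
    have : |x 0 - y 0| ≤ ‖x - y‖ := by simpa using abs_coord_le (x - y)
    rw [abs_le] at this; linarith
  have ha2 : ‖x - y‖ ≤ 2 * r := by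
    have : x - y = -(y - (x + (3 / 2 * r) • e1 n)) - (3 / 2 * r) • e1 n := by abel
    rw [this]
    refine (norm_sub_le _ _).trans ?_
    rw [norm_neg, norm_smul, norm_e1, Real.norm_of_nonneg (by linarith)]
    linarith
  have ha : 0 < ‖x - y‖ := hr.trans_le ha1
  refine ⟨⟨hy0, ?_⟩, hy2, ?_⟩
  · rw [mem_ball, dist_eq_norm, norm_sub_rev]; linarith
  set m := min (4 * x 0 * y 0) (4 * r ^ 2) with hm
  have hxy : 0 < x 0 * y 0 := mul_pos hx hy0
  have hm0 : 0 < m := lt_min (by linarith) (by positivity)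
  have hP : 0 < ‖x - y‖ ^ 2 := by positivity
  have h1 := (rpow_neg_sub_bounds (γ := β / 2) hP (show ‖x - y‖ ^ 2 ≤ ‖x - y‖ ^ 2 + m by linarith)
    (by linarith)).1
  have h2 : aKernel n s x y
      ≥ (‖x - y‖ ^ 2) ^ (-(β / 2)) - (‖x - y‖ ^ 2 + m) ^ (-(β / 2)) := by
    rw [aKernel, ← hβdef, ← neg_div, sq_rpow_half ha.le,
      ← sq_rpow_half (norm_nonneg (reflFirst n x - y)), norm_reflFirst_sub_sq]
    refine sub_le_sub_left (Real.rpow_le_rpow_of_nonpos (by positivity) ?_ ?_) _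
    · linarith [min_le_left (4 * x 0 * y 0) (4 * r ^ 2)]
    · linarith
  have h3 : (8 * r ^ 2) ^ (-(β / 2) - 1) ≤ (‖x - y‖ ^ 2 + m) ^ (-(β / 2) - 1) := by
    refine Real.rpow_le_rpow_of_nonpos (by positivity) ?_ (by linarith)
    have := min_le_right (4 * x 0 * y 0) (4 * r ^ 2)
    nlinarith
  have h4 : 4 * x 0 * r ^ 2 ≤ m * y 0 := by
    rcases min_choice (4 * x 0 * y 0) (4 * r ^ 2) with h | h
    · rw [hm, h]
      have : r ^ 2 ≤ y 0 ^ 2 := by gcongr; linarith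
      nlinarith
    · rw [hm, h]
      have : r ^ 2 * x 0 ≤ r ^ 2 * y 0 := by gcongr; linarith
      nlinarith
  have h5 : (8 * r ^ 2) ^ (-(β / 2) - 1) = 8 ^ (-(β / 2) - 1) * (r ^ (-β) / r ^ 2) := by
    rw [Real.mul_rpow (by norm_num) (by positivity)]
    congr 1
    rw [show -(β / 2) - 1 = (-β - 2) / 2 by ring, sq_rpow_half hr.le,
      Real.rpow_sub hr, Real.rpow_two]
  have hE : 0 < 8 ^ (-(β / 2) - 1) * (r ^ (-β) / r ^ 2) := by positivity
  calc _ = (β / 2) * (8 ^ (-(β / 2) - 1) * (r ^ (-β) / r ^ 2)) * (4 * x 0 * r ^ 2) := by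
        field_simp; ring
    _ ≤ (β / 2) * (8 ^ (-(β / 2) - 1) * (r ^ (-β) / r ^ 2)) * (m * y 0) := by gcongr
    _ = ((β / 2) * m * (8 * r ^ 2) ^ (-(β / 2) - 1)) * y 0 := by rw [h5]; ring
    _ ≤ ((β / 2) * m * (‖x - y‖ ^ 2 + m) ^ (-(β / 2) - 1)) * y 0 := by gcongr
    _ ≤ aKernel n s x y * y 0 := by
        gcongr
        have e : ‖x - y‖ ^ 2 + m - ‖x - y‖ ^ 2 = m := by ring
        rw [e] at h1
        linarith

lemma gain_const_eq {x : Euc n} {r : ℝ} (hr : 0 < r) :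
    (2 * (n + 2 * s) * 8 ^ (-(((n : ℝ) + 2 * s) / 2) - 1) * x 0 * r ^ (-((n : ℝ) + 2 * s)))
      * volume.real (ball (x + (3 / 2 * r) • e1 n) (r / 2)) = gainConst n s * x 0 * r ^ (-(2 * s)) := by
  have e : r ^ (-(2 * s)) = r ^ (-((n : ℝ) + 2 * s)) * r ^ n := by
    rw [← Real.rpow_natCast, ← Real.rpow_add hr]; congr 1; ring
  rw [Measure.real, Measure.addHaar_ball_of_pos _ _ (half_pos hr), ENNReal.toReal_mul,
      ENNReal.toReal_ofReal (by positivity), finrank_euclideanSpace_fin, gainConst, e,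
      Measure.real, div_eq_mul_inv r 2, mul_pow]
  ring

lemma gain_coord (hs : 0 < s) {x : Euc n} (hx : 0 < x 0) {r : ℝ} (hr : 0 < r) :
    gainConst n s * x 0 * r ^ (-(2 * s)) ≤ ∫ y in halfSpace n \ ball x r, aKernel n s x y * y 0 := by
  set B := ball (x + (3 / 2 * r) • e1 n) (r / 2) with hB
  have hi := integrableOn_aKernel_coord (n := n) hs hx hr
  have hsub : B ⊆ halfSpace n \ ball x r := fun y hy => (gain_pointwise hs hx hr hy).1
  rw [← gain_const_eq hr, mul_comm _ (volume.real _), ← smul_eq_mul, ← setIntegral_const]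
  calc _ ≤ ∫ y in B, aKernel n s x y * y 0 :=
        setIntegral_mono_on (integrableOn_const measure_ball_lt_top.ne) (hi.mono_set hsub)
          measurableSet_ball fun y hy => (gain_pointwise hs hx hr hy).2.2
    _ ≤ _ := by
        refine setIntegral_mono_set hi ?_ (.of_forall hsub)
        filter_upwards [self_mem_ae_restrict (measurableSet_half_diff x r)] with y hy
        have hy0 : 0 < y 0 := hy.1
        exact mul_nonneg (aKernel_nonneg hs hx hy0 (not_mem_ball_ne hr hy.2)) hy0.le

lemma gain_one (hs : 0 < s) {x : Euc n} (hx : 0 < x 0) {r R : ℝ} (hr : 0 < r) (hr1 : r ≤ 1)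
    (hxR : ‖x‖ ≤ R) :
    gainConst n s * x 0 * r ^ (-(2 * s)) / (R + 2) ≤ ∫ y in halfSpace n \ ball x r, aKernel n s x y := by
  have hR : 0 ≤ R := (norm_nonneg _).trans hxR
  set B := ball (x + (3 / 2 * r) • e1 n) (r / 2) with hB
  have hi := integrableOn_aKernel (n := n) hs hx hr
  have hsub : B ⊆ halfSpace n \ ball x r := fun y hy => (gain_pointwise hs hx hr hy).1
  rw [div_le_iff₀ (by linarith), ← gain_const_eq hr, mul_comm _ (volume.real _), ← smul_eq_mul,
    ← setIntegral_const, ← integral_mul_const]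
  calc _ ≤ ∫ y in B, aKernel n s x y * (R + 2) := by
        refine setIntegral_mono_on (integrableOn_const measure_ball_lt_top.ne)
          ((hi.mono_set hsub).mul_const _) measurableSet_ball fun y hy => ?_
        obtain ⟨h1, h2, h3⟩ := gain_pointwise hs hx hr hy
        have h4 : x 0 ≤ R := (le_abs_self _).trans ((abs_coord_le x).trans hxR)
        have hy0 : 0 < y 0 := h1.1
        have := aKernel_nonneg hs hx hy0 (not_mem_ball_ne hr h1.2)
        refine h3.trans ?_
        gcongr; linarith
    _ ≤ _ := by
        refine setIntegral_mono_set (hi.mul_const _) ?_ (.of_forall hsub)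
        filter_upwards [self_mem_ae_restrict (measurableSet_half_diff x r)] with y hy
        have hy0 : 0 < y 0 := hy.1
        exact mul_nonneg (aKernel_nonneg hs hx hy0 (not_mem_ball_ne hr hy.2)) (by linarith)

end Far

/-! ### Cutoff functions and the one-variable comparison profile -/

section Cutoff

lemma mixedBound_of_lipschitz_fderiv {E : Type*} [NormedAddCommGroup E] [NormedSpace ℝ E]
    {f : E → ℝ} {A : NNReal} (hf : Differentiable ℝ f) (hA : LipschitzWith A (fderiv ℝ f)) :
    MixedBound f A := by
  intro a v w
  have hd : ∀ z : E, HasFDerivAt (fun z => f (a + z + w) - f (a + z))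
      (fderiv ℝ f (a + z + w) - fderiv ℝ f (a + z)) z := by
    intro z
    have h1 : HasFDerivAt (fun z => f (a + z + w)) (fderiv ℝ f (a + z + w)) z := by
      have := (hf (a + z + w)).hasFDerivAt.comp z
        (((hasFDerivAt_id z).const_add a).add_const w)
      rw [ContinuousLinearMap.comp_id] at this
      exact this
    have h2 : HasFDerivAt (fun z => f (a + z)) (fderiv ℝ f (a + z)) z := by
      have := (hf (a + z)).hasFDerivAt.comp z ((hasFDerivAt_id z).const_add a)
      rw [ContinuousLinearMap.comp_id] at this
      exact this
    exact h1.sub h2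
  have hb : ∀ z ∈ Set.univ, ‖fderiv ℝ f (a + z + w) - fderiv ℝ f (a + z)‖ ≤ A * ‖w‖ := by
    intro z _
    have := hA.dist_le_mul (a + z + w) (a + z)
    simpa [dist_eq_norm] using this
  have := convex_univ.norm_image_sub_le_of_norm_hasFDerivWithin_le
    (fun z _ => (hd z).hasFDerivWithinAt) hb (Set.mem_univ 0) (Set.mem_univ v)
  rw [Real.norm_eq_abs] at this
  calc _ = _ := by congr 1; simp only [add_zero]; ring
    _ ≤ _ := this
    _ = _ := by rw [sub_zero]; ring

lemma MixedBound.comp {E : Type*} [NormedAddCommGroup E] {G : ℝ → ℝ} {h : E → ℝ}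
    {C₁ C₂ L A : ℝ} (hC₁ : 0 ≤ C₁) (hC₂ : 0 ≤ C₂) (hL : 0 ≤ L)
    (hG1 : ∀ a b, |G a - G b| ≤ C₁ * |a - b|) (hG2 : MixedBound G C₂)
    (hh1 : ∀ a b, |h a - h b| ≤ L * ‖a - b‖) (hh2 : MixedBound h A) :
    MixedBound (fun y => G (h y)) (C₁ * A + C₂ * L ^ 2) := by
  intro a v w
  have e1 := hh2 a v w
  have e2 : |h (a + v) - h a| ≤ L * ‖v‖ := by simpa using hh1 (a + v) a
  have e3 : |h (a + w) - h a| ≤ L * ‖w‖ := by simpa using hh1 (a + w) a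
  have g1 := hG1 (h (a + v + w)) (h a + (h (a + v) - h a) + (h (a + w) - h a))
  have g2 := hG2 (h a) (h (a + v) - h a) (h (a + w) - h a)
  simp only [Real.norm_eq_abs] at g2
  have e4 : h (a + v + w) - (h a + (h (a + v) - h a) + (h (a + w) - h a))
      = h (a + v + w) - h (a + v) - h (a + w) + h a := by ring
  rw [e4] at g1
  have g1' := g1.trans (mul_le_mul_of_nonneg_left e1 hC₁)
  have g2' : C₂ * |h (a + v) - h a| * |h (a + w) - h a| ≤ C₂ * (L * ‖v‖) * (L * ‖w‖) := by
    gcongr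
  have g3 := g2.trans g2'
  rw [add_sub_cancel, add_sub_cancel] at g3
  have := abs_add_le (G (h (a + v + w)) - G (h a + (h (a + v) - h a) + (h (a + w) - h a)))
    (G (h a + (h (a + v) - h a) + (h (a + w) - h a)) - G (h (a + v)) - G (h (a + w)) + G (h a))
  rw [add_sub_cancel] at *
  calc _ = _ := by congr 1; ring
    _ ≤ _ := this
    _ ≤ _ := add_le_add g1' g3
    _ = _ := by ring

/-- `η` is an even cutoff function with values in `[0,1]`, supported in the compact set `Q ⊆ Ω`,
with Lipschitz constant `L` and second differences controlled by `A`. -/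
structure IsCutoff {n : ℕ} [NeZero n] (Ω Q : Set (Euc n)) (η : Euc n → ℝ) (L A : ℝ) : Prop where
  compact : IsCompact Q
  subset : Q ⊆ Ω
  cont : Continuous η
  zero : ∀ y, y ∉ Q → η y = 0
  nonneg : ∀ y, 0 ≤ η y
  le_one : ∀ y, η y ≤ 1
  even : ∀ y, η (reflFirst n y) = η y
  L_nonneg : 0 ≤ L
  lip : ∀ a b, |η a - η b| ≤ L * ‖a - b‖
  A_nonneg : 0 ≤ A
  mixed : MixedBound η A

lemma exists_cutoff {n : ℕ} [NeZero n] {Ω Ωt : Set (Euc n)} (hΩ : IsOpen Ω)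
    (hΩs : reflFirst n '' Ω = Ω) (hb : Bornology.IsBounded Ωt)
    (hΩts : reflFirst n '' Ωt = Ωt) (hcpt : closure Ωt ⊆ Ω) :
    ∃ (η : Euc n → ℝ) (Q : Set (Euc n)) (L A : ℝ), IsCutoff Ω Q η L A ∧ ∀ y ∈ Ωt, η y = 1 := by
  have hc : IsCompact (closure Ωt) := hb.isCompact_closure
  obtain ⟨P, hP, hP1, hP2⟩ := exists_compact_between hc hΩ hcpt
  obtain ⟨f, hf1, hf0, hf01⟩ := exists_contMDiffMap_one_nhds_of_subset_interior
    (n := (2 : ℕ∞)) (modelWithCornersSelf ℝ (Euc n)) isClosed_closure hP1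
  have hfd : ContDiff ℝ 2 f := by
    have := f.contMDiff
    rw [contMDiff_iff_contDiff] at this
    exact this
  have hfone : ∀ y ∈ Ωt, f y = 1 := fun y hy => hf1.self_of_nhdsSet y (subset_closure hy)
  set Q := P ∪ reflFirst n '' P with hQ
  have hQc : IsCompact Q := hP.union (hP.image continuous_reflFirst)
  have hQΩ : Q ⊆ Ω := by
    refine Set.union_subset hP2 ?_
    rw [← hΩs]; exact Set.image_mono hP2
  set η : Euc n → ℝ := fun y => (f y + f (reflFirst n y)) / 2 with hη
  have hrd : ContDiff ℝ 2 (fun y => reflFirst n y) := by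
    have : (fun y => reflFirst n y) = fun y => y - (2 * y 0) • e1 n := by
      ext1 y; exact reflFirst_eq y
    rw [this]
    have h0 : ContDiff ℝ 2 (fun y : Euc n => y 0) := by fun_prop
    fun_prop
  have hηd : ContDiff ℝ 2 η := (hfd.add (hfd.comp hrd)).div_const 2
  have hη0 : ∀ y, y ∉ Q → η y = 0 := by
    intro y hy
    have h1 : y ∉ P := fun h => hy (Or.inl h)
    have h2 : reflFirst n y ∉ P := fun h => hy (Or.inr ⟨_, h, reflFirst_reflFirst y⟩)
    simp [hη, hf0 _ h1, hf0 _ h2]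
  have hcs : HasCompactSupport η := HasCompactSupport.intro hQc hη0
  obtain ⟨L, hL⟩ := hηd.lipschitzWith_of_hasCompactSupport hcs (by norm_num)
  have hdd : ContDiff ℝ 1 (fderiv ℝ η) := hηd.fderiv_right (by norm_num)
  obtain ⟨A, hA⟩ := hdd.lipschitzWith_of_hasCompactSupport (hcs.fderiv ℝ) (by norm_num)
  refine ⟨η, Q, L, A, ⟨hQc, hQΩ, hηd.continuous, hη0, ?_, ?_, ?_, L.2, ?_, A.2,
    mixedBound_of_lipschitz_fderiv (hηd.differentiable (by norm_num)) hA⟩, ?_⟩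
  · intro y; have := (hf01 y).1; have := (hf01 (reflFirst n y)).1; simp only [hη]; linarith
  · intro y; have := (hf01 y).2; have := (hf01 (reflFirst n y)).2; simp only [hη]; linarith
  · intro y; simp only [hη, reflFirst_reflFirst]; ring
  · intro a b
    have := hL.dist_le_mul a b
    simpa [dist_eq_norm] using this
  · intro y hy
    have : reflFirst n y ∈ Ωt := by rw [← hΩts]; exact ⟨y, hy, rfl⟩
    simp only [hη, hfone y hy, hfone _ this]; norm_num

end Cutoff

section Profile

lemma inv_pow_le_quadratic (N : ℕ) : ∃ D : ℝ, 0 ≤ D ∧ ∀ v : ℝ, |v| ≤ 1 / 2 →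
    ((1 + v) ^ N)⁻¹ ≤ 1 - N * v + D * v ^ 2 := by
  induction N with
  | zero => exact ⟨0, le_rfl, fun v _ => by simp⟩
  | succ N ih =>
    obtain ⟨D, hD, h⟩ := ih
    refine ⟨2 + 2 * N + 2 * D, by positivity, fun v hv => ?_⟩
    have hN : (0 : ℝ) ≤ N := N.cast_nonneg
    have hv' := abs_le.1 hv
    have hpos : 0 < 1 + v := by linarith
    have h1 : (1 + v)⁻¹ ≤ 1 - v + 2 * v ^ 2 := by
      rw [inv_le_iff_one_le_mul₀ hpos]
      nlinarith [mul_nonneg (sq_nonneg v) (by linarith : 0 ≤ 1 + 2 * v)]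
    have h2 := h v hv
    have h3 : (0 : ℝ) ≤ 1 - v + 2 * v ^ 2 := by nlinarith
    have h4 : 0 ≤ ((1 + v) ^ N)⁻¹ := by positivity
    rw [pow_succ, mul_inv]
    calc _ ≤ (1 - N * v + D * v ^ 2) * (1 - v + 2 * v ^ 2) :=
          mul_le_mul h2 h1 (by positivity) (h4.trans h2)
      _ ≤ _ := by
          have e1 : v ^ 2 ≤ 1 / 4 := by nlinarith
          have e2 : 0 ≤ v ^ 2 * (1 / 2 + v) := by
            apply mul_nonneg (sq_nonneg v); linarith
          push_cast
          nlinarith [mul_nonneg hN e2, mul_nonneg hD e2,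
            mul_nonneg (mul_nonneg hD (sq_nonneg v)) (by linarith : 0 ≤ 1 / 4 - v ^ 2)]

/-- A bounded positive `C^{1,1}` profile on `ℝ` touching `τ ↦ τ^{-N}` from above at `τ = 1`. -/
lemma exists_profile (N : ℕ) : ∃ (G : ℝ → ℝ) (cG M₀ C₁ C₂ : ℝ), 0 < cG ∧ 0 ≤ C₁ ∧ 0 ≤ C₂ ∧
    Continuous G ∧ G 1 = 1 ∧ (∀ τ, cG ≤ G τ) ∧ (∀ τ, G τ ≤ M₀) ∧
    (∀ a b, |G a - G b| ≤ C₁ * |a - b|) ∧ MixedBound G C₂ ∧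
    ∀ τ, |τ - 1| ≤ 1 / 2 → (τ ^ N)⁻¹ ≤ G τ := by
  obtain ⟨D, hD, hDv⟩ := inv_pow_le_quadratic N
  have hN : (0 : ℝ) ≤ N := N.cast_nonneg
  set M : ℝ := 5 * (D + N) + N ^ 2 with hM
  have hM0 : 0 ≤ M := by positivity
  set G : ℝ → ℝ := fun τ => 1 - N * Real.sin (τ - 1) + M * (1 - Real.cos (τ - 1)) with hG
  have hd1 : ∀ τ, HasDerivAt G (-N * Real.cos (τ - 1) + M * Real.sin (τ - 1)) τ := by
    intro τ
    have hi : HasDerivAt (fun τ : ℝ => τ - 1) 1 τ := (hasDerivAt_id τ).sub_const 1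
    have := ((hi.sin.const_mul (N : ℝ)).const_sub 1).add
      ((hi.cos.const_sub 1).const_mul M)
    exact this.congr_deriv (by ring)
  have hb : ∀ τ, |(-N * Real.cos (τ - 1) + M * Real.sin (τ - 1))| ≤ N + M := by
    intro τ
    have h1 := Real.abs_cos_le_one (τ - 1)
    have h2 := Real.abs_sin_le_one (τ - 1)
    calc _ ≤ |(-N * Real.cos (τ - 1))| + |M * Real.sin (τ - 1)| := abs_add_le _ _
      _ = N * |Real.cos (τ - 1)| + M * |Real.sin (τ - 1)| := by
          rw [abs_mul, abs_mul, abs_neg, abs_of_nonneg hN, abs_of_nonneg hM0]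
      _ ≤ N * 1 + M * 1 := by gcongr
      _ = _ := by ring
  have hd2 : ∀ τ, HasDerivAt (fun τ => -N * Real.cos (τ - 1) + M * Real.sin (τ - 1))
      (N * Real.sin (τ - 1) + M * Real.cos (τ - 1)) τ := by
    intro τ
    have hi : HasDerivAt (fun τ : ℝ => τ - 1) 1 τ := (hasDerivAt_id τ).sub_const 1
    have := (hi.cos.const_mul (-(N : ℝ))).add (hi.sin.const_mul M)
    exact this.congr_deriv (by ring)
  have hb2 : ∀ τ, |(N * Real.sin (τ - 1) + M * Real.cos (τ - 1))| ≤ N + M := by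
    intro τ
    have h1 := Real.abs_cos_le_one (τ - 1)
    have h2 := Real.abs_sin_le_one (τ - 1)
    calc _ ≤ |(N * Real.sin (τ - 1))| + |M * Real.cos (τ - 1)| := abs_add_le _ _
      _ = N * |Real.sin (τ - 1)| + M * |Real.cos (τ - 1)| := by
          rw [abs_mul, abs_mul, abs_of_nonneg hN, abs_of_nonneg hM0]
      _ ≤ N * 1 + M * 1 := by gcongr
      _ = _ := by ring
  set S := Real.sqrt (N ^ 2 + M ^ 2) with hS
  have hSq : S ^ 2 = N ^ 2 + M ^ 2 := Real.sq_sqrt (by positivity)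
  have hS0 : 0 ≤ S := Real.sqrt_nonneg _
  have hcG : S < 1 + M := by
    nlinarith
  have hGd : Differentiable ℝ G := fun τ => (hd1 τ).differentiableAt
  refine ⟨G, 1 + M - S, 1 + N + 2 * M, N + M, N + M, by linarith, by positivity, by positivity,
    hGd.continuous, by simp [hG], ?_, ?_, ?_, ?_, ?_⟩
  · intro τ
    have h1 : |N * Real.sin (τ - 1) + M * Real.cos (τ - 1)| ≤ S := by
      apply Real.abs_le_sqrt
      nlinarith [Real.sin_sq_add_cos_sq (τ - 1),
        sq_nonneg (N * Real.cos (τ - 1) - M * Real.sin (τ - 1))]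
    have := (abs_le.1 h1).2
    simp only [hG]; linarith
  · intro τ
    have h1 := Real.neg_one_le_sin (τ - 1)
    have h2 := Real.neg_one_le_cos (τ - 1)
    simp only [hG]
    nlinarith [mul_nonneg hN (by linarith : 0 ≤ 1 + Real.sin (τ - 1)),
      mul_nonneg hM0 (by linarith : 0 ≤ 1 + Real.cos (τ - 1))]
  · intro a b
    have := convex_univ.norm_image_sub_le_of_norm_hasDerivWithin_le
      (fun z _ => (hd1 z).hasDerivWithinAt) (fun z _ => hb z) (Set.mem_univ b) (Set.mem_univ a)
    simpa using this
  · have hnn : 0 ≤ (N : ℝ) + M := by positivity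
    refine mixedBound_of_lipschitz_fderiv (A := ⟨N + M, hnn⟩) hGd ?_
    refine LipschitzWith.of_dist_le_mul fun a b => ?_
    have h1 := convex_univ.norm_image_sub_le_of_norm_hasDerivWithin_le
      (fun z _ => (hd2 z).hasDerivWithinAt) (fun z _ => hb2 z) (Set.mem_univ b) (Set.mem_univ a)
    have e : ∀ z, fderiv ℝ G z = ContinuousLinearMap.toSpanSingleton ℝ
        (-N * Real.cos (z - 1) + M * Real.sin (z - 1)) := fun z => (hd1 z).hasFDerivAt.fderiv
    have hsub : ∀ p q : ℝ, ContinuousLinearMap.toSpanSingleton ℝ p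
        - ContinuousLinearMap.toSpanSingleton ℝ q = ContinuousLinearMap.toSpanSingleton ℝ (p - q) := by
      intro p q; ext; simp
    rw [dist_eq_norm, dist_eq_norm, e, e, hsub,
      ContinuousLinearMap.norm_toSpanSingleton]
    exact h1
  · intro τ hτ
    have h1 := hDv (τ - 1) hτ
    rw [add_sub_cancel] at h1
    refine h1.trans ?_
    set v := τ - 1 with hv
    have hv' := abs_le.1 hτ
    have hc : Real.cos v ≤ 1 - v ^ 2 / 5 := by
      have h := Real.cos_le_one_sub_mul_cos_sq (x := v)
        (hτ.trans (by linarith [Real.pi_gt_three]))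
      have hpi : (1 / 5 : ℝ) ≤ 2 / Real.pi ^ 2 := by
        rw [div_le_div_iff₀ (by norm_num) (by positivity)]
        nlinarith [Real.pi_lt_d2, Real.pi_gt_three]
      nlinarith [mul_le_mul_of_nonneg_right hpi (sq_nonneg v)]
    have hsin : Real.sin v ≤ v + v ^ 2 := by
      have h := (abs_le.1 (Real.sin_bound (hτ.trans (by norm_num)))).2
      have e5 : |v| ^ 5 = v ^ 4 * |v| := by
        rw [show |v| ^ 5 = (|v| ^ 2) ^ 2 * |v| by ring, sq_abs]; ring
      have e2 : v ^ 2 ≤ 1 := by nlinarith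
      have e4 : v ^ 4 ≤ v ^ 2 := by nlinarith [sq_nonneg v]
      have e6 : v ^ 4 * |v| ≤ v ^ 2 := by nlinarith [sq_nonneg v, abs_nonneg v, sq_nonneg (v ^ 2)]
      have e3 : 0 ≤ v ^ 2 * (1 / 2 + v) := mul_nonneg (sq_nonneg v) (by linarith)
      rw [e5] at h
      nlinarith
    simp only [hG, ← hv]
    nlinarith [mul_le_mul_of_nonneg_left hsin hN, mul_le_mul_of_nonneg_left hc hM0,
      mul_nonneg (mul_nonneg hN hN) (sq_nonneg v)]

end Profile

/-! ### The lower barrier -/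

/-- `u` is a nonnegative antisymmetric function, continuous on `Ω`, with
`|(-Δ)ˢ u| ≤ K u` pointwise on `Ω⁺`. -/
structure IsNonnegSol (n : ℕ) [NeZero n] (s : ℝ) (Ω : Set (Euc n)) (K : ℝ) (u : Euc n → ℝ) :
    Prop where
  mem : MemA n s u
  nonneg : ∀ x ∈ halfSpace n, 0 ≤ u x
  cont : ContinuousOn u Ω
  eqn : ∀ x ∈ Ω ∩ halfSpace n, ∃ l, |l| ≤ K * u x ∧ HasAntiFracLap n s u x l

section Lower

variable {n : ℕ} [NeZero n] {s : ℝ}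

lemma tendsto_setIntegral_diff_ball {g : Euc n → ℝ} {S : Set (Euc n)}
    (hg : IntegrableOn g S) (x : Euc n) :
    Tendsto (fun ε : ℝ => ∫ y in S \ ball x ε, g y) (𝓝[>] 0) (𝓝 (∫ y in S, g y)) := by
  classical
  have e : ∀ ε : ℝ, ∫ y in S \ ball x ε, g y = ∫ y in S, (ball x ε)ᶜ.indicator g y := by
    intro ε
    rw [setIntegral_indicator measurableSet_ball.compl]; rfl
  simp_rw [e]
  refine tendsto_integral_filter_of_dominated_convergence (fun y => ‖g y‖)
    (.of_forall fun ε => hg.aestronglyMeasurable.indicator measurableSet_ball.compl)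
    (.of_forall fun ε => .of_forall fun y => norm_indicator_le_norm_self _ _) hg.norm ?_
  have hne : ∀ᵐ y ∂(volume.restrict S), y ≠ x :=
    ae_restrict_of_ae (Measure.ae_ne volume x)
  filter_upwards [hne] with y hy
  refine tendsto_const_nhds.congr' ?_
  have hd : 0 < dist y x := dist_pos.2 hy
  filter_upwards [Ioo_mem_nhdsGT hd] with ε hε
  rw [Set.indicator_of_mem]
  simp only [Set.mem_compl_iff, mem_ball, not_lt]
  exact hε.2.le

lemma continuous_aWeight (hs : 0 < s) : Continuous (aWeight n s) := by
  unfold aWeight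
  have h0 : (0 : ℝ) ≤ (n : ℝ) + 2 * s + 2 := by positivity
  refine Continuous.div (by fun_prop) (continuous_const.add
    (continuous_norm.rpow_const fun _ => Or.inr h0)) fun y => ?_
  positivity

lemma AntiSymmFn.eq_zero {u : Euc n → ℝ} (hu : AntiSymmFn n u) {x : Euc n} (hx : x 0 = 0) :
    u x = 0 := by
  have h := hu x
  have : reflFirst n x = x := by rw [reflFirst_eq, hx]; simp
  rw [this] at h
  linarith

lemma IsCutoff.integrable_weight {Ω Q : Set (Euc n)} {η : Euc n → ℝ} {L A : ℝ} (hs : 0 < s)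
    (hη : IsCutoff Ω Q η L A) : Integrable (fun y => aWeight n s y * (y 0 * η y)) := by
  refine Continuous.integrable_of_hasCompactSupport ?_ ?_
  · exact (continuous_aWeight hs).mul ((by fun_prop : Continuous fun y : Euc n => y 0).mul hη.cont)
  · exact HasCompactSupport.intro hη.compact fun y hy => by simp [hη.zero y hy]

/-- The contradiction inequality at a negative minimum `x` of `u - t y₁ η`. -/
lemma lower_at_min (hs : s ∈ Set.Ioo (0 : ℝ) 1) {Ω Q : Set (Euc n)} {η : Euc n → ℝ}
    {L A R K : ℝ} (hη : IsCutoff Ω Q η L A) {u : Euc n → ℝ}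
    (hK : 0 ≤ K) (hu : IsNonnegSol n s Ω K u) {t m : ℝ} (ht : 0 ≤ t) (hm : 0 ≤ m) {x : Euc n}
    (hxΩ : x ∈ Ω) (hx : 0 < x 0) (hxR : ‖x‖ ≤ R) (hux : u x = t * (x 0 * η x) - m)
    (hmin : ∀ y ∈ halfSpace n, t * (y 0 * η y) - m ≤ u y) :
    cns n s * kLow n s R * ANorm n s u ≤ t * (cns n s * opConst n s * (A + 1) + K
      + cns n s * kLow n s R * ∫ y in halfSpace n, aWeight n s y * (y 0 * η y)) := by
  have hs0 := hs.1
  have hR : 0 ≤ R := (norm_nonneg _).trans hxR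
  have hc := cns_pos hs n
  have hk := kLow_pos (n := n) hs0 hR
  have hκ : 0 ≤ cns 1 s / s := (div_pos (by simpa using cns_pos hs 1) hs0).le
  obtain ⟨l, hl, hlim⟩ := hu.eqn x ⟨hxΩ, hx⟩
  have hlim : Tendsto (truncOp n s u x) (𝓝[>] 0) (𝓝 l) := hlim
  have hlin : Tendsto (truncOp n s (fun y => y 0) x) (𝓝[>] 0) (𝓝 0) := hasAntiFracLap_coord hs hx
  have hM : ∀ y, |η y| ≤ 1 := fun y => by rw [abs_of_nonneg (hη.nonneg y)]; exact hη.le_one y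
  have iwu := hu.mem.integrableOn_weight
  have iwp : IntegrableOn (fun y => aWeight n s y * (y 0 * η y)) (halfSpace n) :=
    (hη.integrable_weight hs0).integrableOn
  set P := ∫ y in halfSpace n, aWeight n s y * (y 0 * η y) with hP
  set g : Euc n → ℝ := fun y => aWeight n s y * u y - t * (aWeight n s y * (y 0 * η y)) with hg
  have ig : IntegrableOn g (halfSpace n) := iwu.sub (iwp.const_mul t)
  have hgint : ∫ y in halfSpace n, g y = ANorm n s u - t * P := by
    rw [hg, integral_sub iwu (iwp.const_mul t), integral_const_mul, ← ANorm_eq hu.nonneg]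
  have hJ := tendsto_setIntegral_diff_ball ig x
  rw [hgint] at hJ
  have key : ∀ ε : ℝ, 0 < ε → truncOp n s u x ε ≤
      t * (η x * truncOp n s (fun y => y 0) x ε + cns n s * (opConst n s * x 0 * (A + 1)))
        - cns n s * (kLow n s R * x 0 * ∫ y in halfSpace n \ ball x ε, g y) := by
    intro ε hε
    have hb := truncOp_coord_mul hs hη.A_nonneg hη.cont.measurable hη.mixed hη.even hM hx hε one_pos
    simp only [Real.one_rpow, mul_one] at hb
    have hb' := (abs_le.1 hb).2
    have i1 := integrableOn_aKernel (n := n) hs0 hx hε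
    have i3 := integrableOn_aKernel_coord_mul hs0 hη.cont.measurable hM hx hε
    have i4 := integrableOn_aKernel_mul hs0 hu.mem hx hε
    have iw : IntegrableOn (fun y => aKernel n s x y * (u y - t * (y 0 * η y) + m))
        (halfSpace n \ ball x ε) := by
      refine ((i4.sub (i3.const_mul t)).add (i1.mul_const m)).congr (.of_forall fun y => ?_)
      simp only [Pi.sub_apply, Pi.add_apply]; ring
    have ip : IntegrableOn (fun y => aKernel n s x y * (x 0 * η x - y 0 * η y))
        (halfSpace n \ ball x ε) := by
      refine ((i1.mul_const (x 0 * η x)).sub i3).congr (.of_forall fun y => ?_)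
      simp only [Pi.sub_apply]; ring
    have e1 : ∫ y in halfSpace n \ ball x ε, aKernel n s x y * (u x - u y)
        = t * (∫ y in halfSpace n \ ball x ε, aKernel n s x y * (x 0 * η x - y 0 * η y))
          - ∫ y in halfSpace n \ ball x ε, aKernel n s x y * (u y - t * (y 0 * η y) + m) := by
      rw [← integral_const_mul, ← integral_sub (ip.const_mul t) iw]
      congr 1; ext y; rw [hux]; ring
    have e2 : truncOp n s u x ε = t * truncOp n s (fun y => y 0 * η y) x ε
        - cns n s * (∫ y in halfSpace n \ ball x ε, aKernel n s x y * (u y - t * (y 0 * η y) + m))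
        - cns 1 s / s * m * x 0 ^ (-(2 * s)) := by
      simp only [truncOp, e1]; rw [hux]; ring
    have h3 : kLow n s R * x 0 * ∫ y in halfSpace n \ ball x ε, g y
        ≤ ∫ y in halfSpace n \ ball x ε, aKernel n s x y * (u y - t * (y 0 * η y) + m) := by
      rw [← integral_const_mul]
      refine setIntegral_mono_on ((ig.mono_set Set.sdiff_subset).const_mul _) iw
        (measurableSet_half_diff x ε) fun y hy => ?_
      have hy0 : 0 < y 0 := hy.1
      have hw0 := hmin y hy.1
      have h1 := weight_le_aKernel hs0 hx hxR hy0 (not_mem_ball_ne hε hy.2)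
      have h2 := aWeight_nonneg (s := s) hy0
      calc _ = kLow n s R * x 0 * aWeight n s y * (u y - t * (y 0 * η y)) := by
            simp only [hg]; ring
        _ ≤ kLow n s R * x 0 * aWeight n s y * (u y - t * (y 0 * η y) + m) := by
            refine mul_le_mul_of_nonneg_left (by linarith) (by positivity)
        _ ≤ _ := mul_le_mul_of_nonneg_right h1 (by linarith)
    have h4 : 0 ≤ cns 1 s / s * m * x 0 ^ (-(2 * s)) := by positivity
    rw [e2]
    have h5 := mul_le_mul_of_nonneg_left h3 hc.le
    have h6 := mul_le_mul_of_nonneg_left hb' ht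
    linarith
  have hlim2 := ((hlin.const_mul (η x)).add_const
    (cns n s * (opConst n s * x 0 * (A + 1)))).const_mul t |>.sub
      ((hJ.const_mul (kLow n s R * x 0)).const_mul (cns n s))
  have hle := le_of_tendsto_of_tendsto hlim hlim2
    (by filter_upwards [self_mem_nhdsWithin] with ε hε using key ε hε)
  have hl' := (abs_le.1 hl).1
  have hux' : K * u x ≤ K * (t * x 0) := by
    refine mul_le_mul_of_nonneg_left ?_ hK
    have : x 0 * η x ≤ x 0 := by nlinarith [hη.le_one x]
    have := mul_le_mul_of_nonneg_left this ht
    linarith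
  rw [mul_zero, zero_add] at hle
  refine le_of_mul_le_mul_left (a := x 0) ?_ hx
  linarith

/-- Comparison from below with a multiple of `y₁ η(y)`. -/
lemma lower_bound (hs : s ∈ Set.Ioo (0 : ℝ) 1) {Ω Q : Set (Euc n)} {η : Euc n → ℝ}
    {L A R K : ℝ} (hη : IsCutoff Ω Q η L A) (hR : ∀ x ∈ Ω, ‖x‖ ≤ R) (hR0 : 0 ≤ R) (hK : 0 ≤ K) :
    ∃ C : ℝ, 0 < C ∧ ∀ u, IsNonnegSol n s Ω K u → ∀ y ∈ halfSpace n,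
      ANorm n s u * (y 0 * η y) ≤ C * u y := by
  have hs0 := hs.1
  have hc := cns_pos hs n
  have hk := kLow_pos (n := n) hs0 hR0
  have ho := opConst_pos (n := n) hs
  set P := ∫ y in halfSpace n, aWeight n s y * (y 0 * η y) with hP
  have hP0 : 0 ≤ P := setIntegral_nonneg measurableSet_halfSpace fun y hy => by
    have hy : 0 < y 0 := hy
    have := aWeight_nonneg (s := s) hy
    have := hη.nonneg y
    positivity
  set B := cns n s * opConst n s * (A + 1) + K + cns n s * kLow n s R * P with hB
  have hB0 : 0 ≤ B := by have := hη.A_nonneg; positivity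
  have hck : 0 < cns n s * kLow n s R := mul_pos hc hk
  refine ⟨(B + 1) / (cns n s * kLow n s R), by positivity, fun u hu z hz => ?_⟩
  by_contra hcon
  push Not at hcon
  have hz0 : 0 < z 0 := hz
  set t := ANorm n s u * (cns n s * kLow n s R) / (B + 1) with ht
  have htz : u z < t * (z 0 * η z) := by
    have : t * (z 0 * η z) = (cns n s * kLow n s R) / (B + 1) * (ANorm n s u * (z 0 * η z)) := by
      rw [ht]; ring
    rw [this, div_mul_eq_mul_div, lt_div_iff₀ (by linarith)]
    rw [div_mul_eq_mul_div, div_lt_iff₀ hck] at hcon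
    linarith
  have huz := hu.nonneg z hz
  have ht0 : 0 < t := by
    have h1 : 0 ≤ z 0 * η z := mul_nonneg hz0.le (hη.nonneg z)
    by_contra h
    push Not at h
    nlinarith
  have hzQ : z ∈ Q := by
    by_contra h
    rw [hη.zero z h] at htz
    simp at htz; linarith
  have hcS : IsCompact (Q ∩ {y | 0 ≤ y 0}) :=
    hη.compact.inter_right (isClosed_le continuous_const (by fun_prop))
  have hcf : ContinuousOn (fun y => u y - t * (y 0 * η y)) (Q ∩ {y | 0 ≤ y 0}) := by
    refine (hu.cont.mono (Set.inter_subset_left.trans hη.subset)).sub ?_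
    have := hη.cont
    fun_prop
  obtain ⟨x, hxS, hxmin⟩ := hcS.exists_isMinOn ⟨z, hzQ, hz0.le⟩ hcf
  have hxz : u x - t * (x 0 * η x) ≤ u z - t * (z 0 * η z) := hxmin ⟨hzQ, hz0.le⟩
  have hx0 : 0 < x 0 := by
    refine lt_of_le_of_ne hxS.2 fun h => ?_
    rw [hu.mem.1.eq_zero h.symm, ← h] at hxz
    simp at hxz; linarith
  have hmain := lower_at_min hs hη hK hu ht0.le (m := t * (x 0 * η x) - u x) (by linarith)
    (hη.subset hxS.1) hx0 (hR x (hη.subset hxS.1)) (by ring) (by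
      intro y hy
      have hy0 : 0 < y 0 := hy
      by_cases hyQ : y ∈ Q
      · have : u x - t * (x 0 * η x) ≤ u y - t * (y 0 * η y) := hxmin ⟨hyQ, hy0.le⟩
        linarith
      · rw [hη.zero y hyQ]
        have := hu.nonneg y hy
        simp; linarith)
  rw [← hP, ← hB] at hmain
  have : t * (B + 1) = ANorm n s u * (cns n s * kLow n s R) := by
    rw [ht, div_mul_cancel₀ _ (by linarith)]
  linarith

end Lower

/-! ### The upper barrier -/

section Upper

variable {n : ℕ} [NeZero n] {s : ℝ}

lemma exists_rpow_neg_ge (hs : 0 < s) (B b : ℝ) (hb : 0 < b) :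
    ∃ θ : ℝ, 0 < θ ∧ θ ≤ b ∧ B ≤ θ ^ (-(2 * s)) := by
  have h := tendsto_rpow_neg_nhdsGT_zero (y := -(2 * s)) (by linarith)
  obtain ⟨θ, h1, h2⟩ := ((h.eventually_ge_atTop B).and (Ioo_mem_nhdsGT hb)).exists
  exact ⟨θ, h2.1, h2.2.le, h1⟩

/-- The differential inequality at an interior touching point: if `u ≤ t' y₁ ξ + m` near `x` with
equality at `x`, then the operator at `x` is bounded below by the far-field gain. -/
lemma upper_at_max (hs : s ∈ Set.Ioo (0 : ℝ) 1) {Ω : Set (Euc n)} {ξ : Euc n → ℝ}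
    {A M₀ cG R K : ℝ} (hA : 0 ≤ A) (hξc : Continuous ξ) (hξ : MixedBound ξ A)
    (hev : ∀ y, ξ (reflFirst n y) = ξ y) (hcG : 0 < cG) (hlow : ∀ y, cG ≤ ξ y)
    (hup : ∀ y, ξ y ≤ M₀) {u : Euc n → ℝ}
    (hu : IsNonnegSol n s Ω K u) {t m r ρ : ℝ} (ht : 0 ≤ t) (hm : 0 ≤ m) (hr : 0 < r) (hr1 : r ≤ 1)
    (hρ : 0 < ρ) {x : Euc n}
    (hxΩ : x ∈ Ω) (hx : 0 < x 0) (hxR : ‖x‖ ≤ R) (hξx : ξ x = 1) (hux : u x = t * x 0 + m)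
    (hmax : ∀ y ∈ halfSpace n, y ∈ ball x r → u y ≤ t * (y 0 * ξ y) + m) :
    cns n s * (t * cG * (gainConst n s * x 0 * r ^ (-(2 * s)))
        + m * (gainConst n s * x 0 * r ^ (-(2 * s)) / (R + 2))
        - kUp n s R * x 0 * r ^ (-((n : ℝ) + 2 * s) - 2) * ANorm n s u)
      + cns 1 s / s * m * x 0 ^ (-(2 * s))
      ≤ K * (t * x 0 + m)
        + t * (cns n s * (opConst n s * x 0 * (A * ρ ^ (2 - 2 * s) + M₀ * ρ ^ (-(2 * s))))) := by
  have hs0 := hs.1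
  have hc := cns_pos hs n
  obtain ⟨l, hl, hlim⟩ := hu.eqn x ⟨hxΩ, hx⟩
  have hlim : Tendsto (truncOp n s u x) (𝓝[>] 0) (𝓝 l) := hlim
  have hlin : Tendsto (truncOp n s (fun y => y 0) x) (𝓝[>] 0) (𝓝 0) := hasAntiFracLap_coord hs hx
  have hM : ∀ y, |ξ y| ≤ M₀ := fun y => by
    rw [abs_of_nonneg (hcG.le.trans (hlow y))]; exact hup y
  set F := cns n s * (t * cG * (gainConst n s * x 0 * r ^ (-(2 * s)))
        + m * (gainConst n s * x 0 * r ^ (-(2 * s)) / (R + 2))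
        - kUp n s R * x 0 * r ^ (-((n : ℝ) + 2 * s) - 2) * ANorm n s u) with hF
  set E := cns n s * (opConst n s * x 0 * (A * ρ ^ (2 - 2 * s) + M₀ * ρ ^ (-(2 * s)))) with hE
  have hInt : ∀ ε : ℝ, 0 < ε → IntegrableOn
      (fun y => aKernel n s x y * (t * (y 0 * ξ y) + m - u y)) (halfSpace n \ ball x ε) := by
    intro ε hε
    have i1 := integrableOn_aKernel (n := n) hs0 hx hε
    have i3 := integrableOn_aKernel_coord_mul hs0 hξc.measurable hM hx hε
    have i4 := integrableOn_aKernel_mul hs0 hu.mem hx hε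
    refine (((i3.const_mul t).add (i1.mul_const m)).sub i4).congr (.of_forall fun y => ?_)
    simp only [Pi.sub_apply, Pi.add_apply]; ring
  have hfar : F ≤ cns n s * ∫ y in halfSpace n \ ball x r,
      aKernel n s x y * (t * (y 0 * ξ y) + m - u y) := by
    have i1 := integrableOn_aKernel (n := n) hs0 hx hr
    have i2 := integrableOn_aKernel_coord (n := n) hs0 hx hr
    have i4 := integrableOn_aKernel_mul hs0 hu.mem hx hr
    refine mul_le_mul_of_nonneg_left ?_ hc.le
    have h1 := gain_coord hs0 hx hr
    have h2 := gain_one hs0 hx hr hr1 hxR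
    have h3 := integral_aKernel_mul_le hs0 hu.mem hu.nonneg hx hr hr1 hxR
    have h1' := mul_le_mul_of_nonneg_left h1 (mul_nonneg ht hcG.le)
    have h2' := mul_le_mul_of_nonneg_left h2 hm
    have i5 : IntegrableOn (fun y => t * cG * (aKernel n s x y * y 0) + m * aKernel n s x y)
      (halfSpace n \ ball x r) := (i2.const_mul (t * cG)).add (i1.const_mul m)
    have e : ∫ y in halfSpace n \ ball x r, (t * cG * (aKernel n s x y * y 0)
          + m * aKernel n s x y - aKernel n s x y * u y)
        = t * cG * (∫ y in halfSpace n \ ball x r, aKernel n s x y * y 0)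
          + m * (∫ y in halfSpace n \ ball x r, aKernel n s x y)
          - ∫ y in halfSpace n \ ball x r, aKernel n s x y * u y := by
      rw [integral_sub i5 i4, integral_add (i2.const_mul (t * cG)) (i1.const_mul m),
        integral_const_mul, integral_const_mul]
    have h5 : ∫ y in halfSpace n \ ball x r, (t * cG * (aKernel n s x y * y 0)
          + m * aKernel n s x y - aKernel n s x y * u y)
        ≤ ∫ y in halfSpace n \ ball x r, aKernel n s x y * (t * (y 0 * ξ y) + m - u y) := by
      refine setIntegral_mono_on (i5.sub i4) (hInt r hr) (measurableSet_half_diff x r)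
        fun y hy => ?_
      have hy0 : 0 < y 0 := hy.1
      have hk := aKernel_nonneg hs0 hx hy0 (not_mem_ball_ne hr hy.2)
      have := mul_le_mul_of_nonneg_left (hlow y) (mul_nonneg ht (mul_nonneg hk hy0.le))
      simp only
      linarith
    linarith
  have key : ∀ ε : ℝ, 0 < ε → ε < r →
      t * (truncOp n s (fun y => y 0) x ε - E) + F + cns 1 s / s * m * x 0 ^ (-(2 * s))
        ≤ truncOp n s u x ε := by
    intro ε hε hεr
    have hb := truncOp_coord_mul hs hA hξc.measurable hξ hev hM hx hε hρ
    rw [← hE, hξx, one_mul] at hb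
    have hb' := mul_le_mul_of_nonneg_left (abs_le.1 hb).1 ht
    have i1 := integrableOn_aKernel (n := n) hs0 hx hε
    have i3 := integrableOn_aKernel_coord_mul hs0 hξc.measurable hM hx hε
    have iw := hInt ε hε
    have ip : IntegrableOn (fun y => aKernel n s x y * (x 0 * ξ x - y 0 * ξ y))
        (halfSpace n \ ball x ε) := by
      refine ((i1.mul_const (x 0 * ξ x)).sub i3).congr (.of_forall fun y => ?_)
      simp only [Pi.sub_apply]; ring
    have e1 : ∫ y in halfSpace n \ ball x ε, aKernel n s x y * (u x - u y)
        = t * (∫ y in halfSpace n \ ball x ε, aKernel n s x y * (x 0 * ξ x - y 0 * ξ y))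
          + ∫ y in halfSpace n \ ball x ε, aKernel n s x y * (t * (y 0 * ξ y) + m - u y) := by
      rw [← integral_const_mul, ← integral_add (ip.const_mul t) iw]
      congr 1; ext y; rw [hux, hξx]; ring
    have e2 : truncOp n s u x ε = t * truncOp n s (fun y => y 0 * ξ y) x ε
        + cns n s * (∫ y in halfSpace n \ ball x ε,
          aKernel n s x y * (t * (y 0 * ξ y) + m - u y))
        + cns 1 s / s * m * x 0 ^ (-(2 * s)) := by
      simp only [truncOp, e1]; rw [hux, hξx]; ring
    have hsub : halfSpace n \ ball x r ⊆ halfSpace n \ ball x ε :=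
      Set.sdiff_subset_sdiff_right (ball_subset_ball hεr.le)
    have h6 := setIntegral_sdiff (measurableSet_half_diff x r) iw hsub
    have h7 : 0 ≤ ∫ y in (halfSpace n \ ball x ε) \ (halfSpace n \ ball x r),
        aKernel n s x y * (t * (y 0 * ξ y) + m - u y) := by
      refine setIntegral_nonneg ((measurableSet_half_diff x ε).diff (measurableSet_half_diff x r))
        fun y hy => ?_
      have hy0 : 0 < y 0 := hy.1.1
      have hyb : y ∈ ball x r := by
        by_contra h; exact hy.2 ⟨hy.1.1, h⟩
      have := hmax y hy.1.1 hyb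
      exact mul_nonneg (aKernel_nonneg hs0 hx hy0 (not_mem_ball_ne hε hy.1.2)) (by linarith)
    have h8 : ∫ y in halfSpace n \ ball x r, aKernel n s x y * (t * (y 0 * ξ y) + m - u y)
        ≤ ∫ y in halfSpace n \ ball x ε, aKernel n s x y * (t * (y 0 * ξ y) + m - u y) := by
      linarith
    have h9 := mul_le_mul_of_nonneg_left h8 hc.le
    rw [e2]
    linarith
  have hlim2 := (((hlin.sub_const E).const_mul t).add_const F).add_const
    (cns 1 s / s * m * x 0 ^ (-(2 * s)))
  have hle := le_of_tendsto_of_tendsto hlim2 hlim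
    (by filter_upwards [Ioo_mem_nhdsGT hr] with ε hε using key ε hε.1 hε.2)
  have hl' := (abs_le.1 hl).2
  rw [hux] at hl'
  linarith

/-- A point where `u - t y₁ η^{-N}` attains its positive maximum over `{η > 0}⁺`. -/
lemma exists_touching {Ω Q : Set (Euc n)} {η : Euc n → ℝ} {L A K : ℝ} (hη : IsCutoff Ω Q η L A)
    {u : Euc n → ℝ} (hu : IsNonnegSol n s Ω K u) {N : ℕ} (hN : N ≠ 0) {t : ℝ}
    (ht : 0 < t) {z : Euc n}
    (hz : 0 < z 0) (hηz : 0 < η z) (hzt : t * z 0 * (η z ^ N)⁻¹ < u z) :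
    ∃ x ∈ Q, 0 < x 0 ∧ 0 < η x ∧ ∃ m, 0 < m ∧ u x = t * x 0 * (η x ^ N)⁻¹ + m ∧
      ∀ y, 0 < y 0 → 0 < η y → u y ≤ t * y 0 * (η y ^ N)⁻¹ + m := by
  set m₀ := u z - t * z 0 * (η z ^ N)⁻¹ with hm₀
  have hm : 0 < m₀ := by linarith
  have hQcl : IsClosed Q := hη.compact.isClosed
  have huQ : ContinuousOn u Q := hu.cont.mono hη.subset
  have hηQ : ContinuousOn η Q := hη.cont.continuousOn
  have hy0Q : ContinuousOn (fun y : Euc n => y 0) Q := by fun_prop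
  -- Multiplying by `η ^ N` makes the superlevel condition closed up to the boundary of `{η > 0}`.
  set S : Set (Euc n) := Q ∩ (fun y => (y 0, u y - m₀, η y ^ N * (u y - m₀) - t * y 0)) ⁻¹'
    {p : ℝ × ℝ × ℝ | 0 ≤ p.1 ∧ 0 ≤ p.2.1 ∧ 0 ≤ p.2.2} with hS
  have hScl : IsClosed S := by
    refine ContinuousOn.preimage_isClosed_of_isClosed ?_ hQcl ?_
    · have h1 : ContinuousOn (fun y => u y - m₀) Q := huQ.sub continuousOn_const
      exact hy0Q.prodMk (h1.prodMk (((hηQ.pow N).mul h1).sub (continuousOn_const.mul hy0Q)))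
    · exact (isClosed_le continuous_const continuous_fst).inter
        ((isClosed_le continuous_const (continuous_fst.comp continuous_snd)).inter
          (isClosed_le continuous_const (continuous_snd.comp continuous_snd)))
  have hSc : IsCompact S := hη.compact.of_isClosed_subset hScl Set.inter_subset_left
  have hSpos : ∀ y ∈ S, 0 < y 0 ∧ 0 < η y := by
    rintro y ⟨hyQ, h1, h2, h3⟩
    simp only at h1 h2 h3
    have hy0 : 0 < y 0 := by
      refine lt_of_le_of_ne h1 fun h => ?_
      rw [hu.mem.1.eq_zero h.symm] at h2
      linarith
    refine ⟨hy0, lt_of_le_of_ne (hη.nonneg y) fun h => ?_⟩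
    rw [← h, zero_pow hN] at h3
    nlinarith
  have hmem : ∀ y, 0 < y 0 → 0 < η y → m₀ ≤ u y - t * y 0 * (η y ^ N)⁻¹ → y ∈ S := by
    intro y hy hηy h
    have hp : 0 < η y ^ N := pow_pos hηy N
    have h1 : 0 ≤ t * y 0 * (η y ^ N)⁻¹ := by positivity
    refine ⟨?_, hy.le, by simp only; linarith, ?_⟩
    · by_contra hyQ
      rw [hη.zero y hyQ] at hηy
      exact lt_irrefl _ hηy
    · have h2 : t * y 0 * (η y ^ N)⁻¹ ≤ u y - m₀ := by linarith
      have h3 := mul_le_mul_of_nonneg_left h2 hp.le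
      have h4 : η y ^ N * (t * y 0 * (η y ^ N)⁻¹) = t * y 0 := by field_simp
      simp only
      linarith
  have hzS : z ∈ S := hmem z hz hηz le_rfl
  have hfc : ContinuousOn (fun y => u y - t * y 0 * (η y ^ N)⁻¹) S := by
    have hSQ : S ⊆ Q := Set.inter_subset_left
    refine (huQ.mono hSQ).sub ((continuousOn_const.mul (hy0Q.mono hSQ)).mul
      (((hηQ.mono hSQ).pow N).inv₀ fun y hy => (pow_pos (hSpos y hy).2 N).ne'))
  obtain ⟨x, hxS, hxmax⟩ := hSc.exists_isMaxOn ⟨z, hzS⟩ hfc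
  have hxz : u z - t * z 0 * (η z ^ N)⁻¹ ≤ u x - t * x 0 * (η x ^ N)⁻¹ := hxmax hzS
  refine ⟨x, hxS.1, (hSpos x hxS).1, (hSpos x hxS).2, u x - t * x 0 * (η x ^ N)⁻¹, by linarith,
    by ring, fun y hy hηy => ?_⟩
  by_cases h : m₀ ≤ u y - t * y 0 * (η y ^ N)⁻¹
  · have : u y - t * y 0 * (η y ^ N)⁻¹ ≤ u x - t * x 0 * (η x ^ N)⁻¹ := hxmax (hmem y hy hηy h)
    linarith
  · linarith

set_option maxHeartbeats 1000000 in
/-- Comparison from above with a multiple of `y₁ η(y)^{-(n+2)}`. -/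
lemma upper_bound (hs : s ∈ Set.Ioo (0 : ℝ) 1) {Ω Q : Set (Euc n)} {η : Euc n → ℝ}
    {L A R K : ℝ} (hη : IsCutoff Ω Q η L A) (hR : ∀ x ∈ Ω, ‖x‖ ≤ R) (hR0 : 0 ≤ R) (hK : 0 ≤ K) :
    ∃ C : ℝ, 0 < C ∧ ∀ u, IsNonnegSol n s Ω K u → ∀ y ∈ halfSpace n,
      η y ^ (n + 2) * u y ≤ C * ANorm n s u * y 0 := by
  have hs0 := hs.1
  have hc := cns_pos hs n
  have hk := kUp_pos (n := n) hs0 hR0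
  have ho := opConst_pos (n := n) hs
  have hg := gainConst_pos (n := n) hs0
  have hκ : 0 < cns 1 s / s := div_pos (by simpa using cns_pos hs 1) hs0
  obtain ⟨G, cG, M₀, C₁, C₂, hcG, hC₁, hC₂, hGc, hG1, hGlow, hGup, hGlip, hGmix, hGpow⟩ :=
    exists_profile (n + 2)
  have hL := hη.L_nonneg
  have hA := hη.A_nonneg
  set A₁ := C₁ * A + C₂ * L ^ 2 with hA₁
  have hA₁0 : 0 ≤ A₁ := by positivity
  have hM₀ : 0 < M₀ := hcG.trans_le ((hGlow 1).trans (hGup 1))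
  set D := cns n s * (opConst n s * (A₁ + M₀)) with hD
  have hD0 : 0 < D := by positivity
  -- `δ` makes the zeroth order term beat `K` near the hyperplane; `θ` makes the gain dominate.
  obtain ⟨δ, hδ, -, hδK⟩ := exists_rpow_neg_ge hs0 (K / (cns 1 s / s)) 1 one_pos
  obtain ⟨θ, hθ, hθb, hθB⟩ := exists_rpow_neg_ge hs0
    (max ((D + K + 1) / (cns n s * cG * gainConst n s))
      (K / (cns n s * (gainConst n s * δ / (R + 2)))))
    (1 / (2 * (L + 1))) (by positivity)
  have hθ1 : θ ≤ 1 := hθb.trans (by rw [div_le_one (by positivity)]; linarith)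
  have hLθ : L * θ ≤ 1 / 2 := by
    rw [le_div_iff₀ (by positivity)] at hθb
    nlinarith
  set Θ := θ ^ (-(2 * s)) with hΘ
  have hΘ0 : 0 < Θ := Real.rpow_pos_of_pos hθ _
  have hΘ1 : D + K + 1 ≤ cns n s * cG * gainConst n s * Θ := by
    have := (le_max_left _ _).trans hθB
    rw [div_le_iff₀ (by positivity)] at this
    linarith
  have hΘ2 : K ≤ cns n s * (gainConst n s * δ / (R + 2)) * Θ := by
    have := (le_max_right _ _).trans hθB
    rw [div_le_iff₀ (by positivity)] at this
    linarith
  have hzero : ∀ a : ℝ, 0 < a →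
      K ≤ cns n s * (gainConst n s * a / (R + 2)) * Θ + cns 1 s / s * a ^ (-(2 * s)) := by
    intro a ha
    have p1 : 0 ≤ cns n s * (gainConst n s * a / (R + 2)) * Θ := by positivity
    have p2 : 0 ≤ cns 1 s / s * a ^ (-(2 * s)) := by positivity
    rcases le_total a δ with h | h
    · have h1 : δ ^ (-(2 * s)) ≤ a ^ (-(2 * s)) :=
        Real.rpow_le_rpow_of_nonpos ha h (by linarith)
      have h2 := hδK.trans h1
      rw [div_le_iff₀ hκ] at h2
      linarith
    · have : cns n s * (gainConst n s * δ / (R + 2)) * Θ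
          ≤ cns n s * (gainConst n s * a / (R + 2)) * Θ := by gcongr
      linarith
  refine ⟨cns n s * kUp n s R * θ ^ (-((n : ℝ) + 2 * s) - 2), by positivity,
    fun u hu z hz => ?_⟩
  set C := cns n s * kUp n s R * θ ^ (-((n : ℝ) + 2 * s) - 2) with hC
  have hz0 : 0 < z 0 := hz
  by_contra hcon
  push Not at hcon
  have hN0 := ANorm_nonneg (s := s) u
  have hC0 : 0 < C := by positivity
  have hηz : 0 < η z := by
    refine lt_of_le_of_ne (hη.nonneg z) fun h => ?_
    rw [← h, zero_pow (by omega)] at hcon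
    have : 0 ≤ C * ANorm n s u * z 0 := by positivity
    linarith
  have hcon' : C * ANorm n s u < η z ^ (n + 2) * u z / z 0 := by rwa [lt_div_iff₀ hz0]
  obtain ⟨t, ht1, ht2⟩ := exists_between hcon'
  have ht0 : 0 < t := lt_of_le_of_lt (by positivity) ht1
  have hpz : 0 < η z ^ (n + 2) := pow_pos hηz _
  obtain ⟨x, hxQ, hx0, hηx, m, hm, hux, hall⟩ := exists_touching hη hu (N := n + 2) (by omega) ht0 hz0 hηz (by
    rw [lt_div_iff₀ hz0] at ht2
    rw [← div_eq_mul_inv, div_lt_iff₀ hpz]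
    linarith)
  set h₀ := η x with hh₀
  have hh1 : h₀ ≤ 1 := hη.le_one x
  have hpx : 0 < h₀ ^ (n + 2) := pow_pos hηx _
  have hr : 0 < θ * h₀ := by positivity
  have hr1 : θ * h₀ ≤ 1 := mul_le_one₀ hθ1 hηx.le hh1
  have hxΩ := hη.subset hxQ
  have hmixh : MixedBound (fun y => η y / h₀) (A / h₀) := by
    intro a v w
    have := hη.mixed a v w
    calc _ = |(η (a + v + w) - η (a + v) - η (a + w) + η a) / h₀| := by congr 1; ring
      _ = |η (a + v + w) - η (a + v) - η (a + w) + η a| / h₀ := by rw [abs_div, abs_of_pos hηx]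
      _ ≤ A * ‖v‖ * ‖w‖ / h₀ := by gcongr
      _ = _ := by ring
  have hliph : ∀ a b, |η a / h₀ - η b / h₀| ≤ L / h₀ * ‖a - b‖ := by
    intro a b
    rw [← sub_div, abs_div, abs_of_pos hηx, div_mul_eq_mul_div]
    gcongr
    exact hη.lip a b
  have hmix := MixedBound.comp hC₁ hC₂ (by positivity : 0 ≤ L / h₀) hGlip hGmix hliph hmixh
  set A₂ := C₁ * (A / h₀) + C₂ * (L / h₀) ^ 2 with hA₂
  have hA₂0 : 0 ≤ A₂ := by positivity
  have hA₂le : A₂ ≤ A₁ / h₀ ^ 2 := by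
    have : A / h₀ ≤ A / h₀ ^ 2 := by
      gcongr
      nlinarith
    have := mul_le_mul_of_nonneg_left this hC₁
    have e : A₁ / h₀ ^ 2 = C₁ * (A / h₀ ^ 2) + C₂ * (L / h₀) ^ 2 := by rw [hA₁]; ring
    rw [e]; linarith
  set t' := t * (h₀ ^ (n + 2))⁻¹ with ht'
  have ht'0 : 0 < t' := by positivity
  have hmain := upper_at_max hs (ξ := fun y => G (η y / h₀)) (A := A₂) (M₀ := M₀) (cG := cG)
    (R := R) (r := θ * h₀) (ρ := h₀) (t := t') (m := m) hA₂0
    (hGc.comp (hη.cont.div_const _)) hmix (fun y => by rw [hη.even]) hcG (fun y => hGlow _)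
    (fun y => hGup _) hu ht'0.le hm.le hr hr1 hηx hxΩ hx0 (hR x hxΩ)
    (by rw [← hh₀, div_self hηx.ne', hG1]) (by rw [hux, ht']; ring) (by
      intro y hy hyb
      have hy0 : 0 < y 0 := hy
      have h1 : |η y - h₀| ≤ h₀ / 2 := by
        refine (hη.lip y x).trans ?_
        rw [mem_ball, dist_eq_norm] at hyb
        calc L * ‖y - x‖ ≤ L * (θ * h₀) := by gcongr
          _ = L * θ * h₀ := by ring
          _ ≤ 1 / 2 * h₀ := by gcongr
          _ = _ := by ring
      have h2 := (abs_le.1 h1).1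
      have hηy : 0 < η y := by linarith
      have h3 : |η y / h₀ - 1| ≤ 1 / 2 := by
        rw [div_sub_one hηx.ne', abs_div, abs_of_pos hηx, div_le_iff₀ hηx]
        linarith
      have h4 := hGpow _ h3
      have h5 := hall y hy0 hηy
      have h6 : t * y 0 * (η y ^ (n + 2))⁻¹ = t' * (y 0 * ((η y / h₀) ^ (n + 2))⁻¹) := by
        rw [ht', div_pow, inv_div]; field_simp
      rw [h6] at h5
      refine h5.trans ?_
      gcongr)
  -- Normalise all powers of `h₀` and `θ`.
  set H := h₀ ^ (-(2 * s)) with hH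
  have hH0 : 0 < H := Real.rpow_pos_of_pos hηx _
  have hH1 : 1 ≤ H := Real.one_le_rpow_of_pos_of_le_one_of_nonpos hηx hh1 (by linarith)
  have er : (θ * h₀) ^ (-(2 * s)) = Θ * H := Real.mul_rpow hθ.le hηx.le
  have er2 : (θ * h₀) ^ (-((n : ℝ) + 2 * s) - 2)
      = θ ^ (-((n : ℝ) + 2 * s) - 2) * ((h₀ ^ (n + 2))⁻¹ * H) := by
    rw [Real.mul_rpow hθ.le hηx.le]
    congr 1
    rw [← Real.rpow_natCast, ← Real.rpow_neg hηx.le, hH, ← Real.rpow_add hηx]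
    congr 1
    push_cast; ring
  have er3 : A₂ * h₀ ^ (2 - 2 * s) ≤ A₁ * H := by
    have : h₀ ^ (2 - 2 * s) = h₀ ^ 2 * H := by
      rw [sub_eq_add_neg, Real.rpow_add hηx, hH]; norm_num
    rw [this]
    calc A₂ * (h₀ ^ 2 * H) ≤ A₁ / h₀ ^ 2 * (h₀ ^ 2 * H) := by gcongr
      _ = _ := by field_simp
  rw [er, er2] at hmain
  have q1 : t' * (cns n s * (opConst n s * x 0 * (A₂ * h₀ ^ (2 - 2 * s) + M₀ * H)))
      ≤ t' * x 0 * H * D := by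
    calc _ ≤ t' * (cns n s * (opConst n s * x 0 * (A₁ * H + M₀ * H))) := by gcongr
      _ = _ := by rw [hD]; ring
  have q2 : K * (t' * x 0) ≤ t' * x 0 * H * K := by
    have : 0 ≤ K * (t' * x 0) := by positivity
    nlinarith
  have q3 := mul_le_mul_of_nonneg_left hΘ1 (by positivity : 0 ≤ t' * x 0 * H)
  have q4 : K * m ≤ cns n s * (m * (gainConst n s * x 0 * (Θ * H) / (R + 2)))
      + cns 1 s / s * m * x 0 ^ (-(2 * s)) := by
    have h1 := mul_le_mul_of_nonneg_left (hzero (x 0) hx0) hm.le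
    have h2 : cns n s * (m * (gainConst n s * x 0 * (Θ * 1) / (R + 2)))
      ≤ cns n s * (m * (gainConst n s * x 0 * (Θ * H) / (R + 2))) := by gcongr
    calc K * m = m * K := mul_comm _ _
      _ ≤ _ := h1
      _ = cns n s * (m * (gainConst n s * x 0 * (Θ * 1) / (R + 2)))
          + cns 1 s / s * m * x 0 ^ (-(2 * s)) := by ring
      _ ≤ _ := by linarith
  have q5 : t' * x 0 * H ≤ C * ANorm n s u * ((h₀ ^ (n + 2))⁻¹ * x 0 * H) := by
    have e : C * ANorm n s u * ((h₀ ^ (n + 2))⁻¹ * x 0 * H) = cns n s * (kUp n s R * x 0 *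
        (θ ^ (-((n : ℝ) + 2 * s) - 2) * ((h₀ ^ (n + 2))⁻¹ * H)) * ANorm n s u) := by
      rw [hC]; ring
    rw [e]
    linarith
  have e6 : t' * x 0 * H = t * ((h₀ ^ (n + 2))⁻¹ * x 0 * H) := by rw [ht']; ring
  rw [e6] at q5
  have := le_of_mul_le_mul_right q5 (by positivity)
  linarith

end Upper

/-! ### The Harnack inequality -/

/-- Harnack inequality for antisymmetric solutions in a general
symmetric domain (Theorem 1.1). -/
theorem stmt0
    (n : ℕ) [NeZero n] (s : ℝ) (hs : s ∈ Set.Ioo (0 : ℝ) 1)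
    (Ω Ωt : Set (Euc n))
    (hΩopen : IsOpen Ω) (hΩconn : IsConnected Ω) (hΩbdd : Bornology.IsBounded Ω)
    (hΩsymm : reflFirst n '' Ω = Ω)
    (hΩtopen : IsOpen Ωt) (hΩtconn : IsConnected Ωt) (hΩtbdd : Bornology.IsBounded Ωt)
    (hΩtsymm : reflFirst n '' Ωt = Ωt)
    (hcpt : closure Ωt ⊆ Ω)
    (K : ℝ) :
    ∃ C : ℝ, 1 ≤ C ∧
      ∀ (c u : Euc n → ℝ) (α : ℝ),
        0 < α → NotInteger (2 * s + α) →
        (∀ x ∈ Ω ∩ halfSpace n, |c x| ≤ K) →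
        MemHolderOn (2 * s + α) Ω u →
        MemA n s u →
        (∀ x ∈ halfSpace n, 0 ≤ u x) →
        (∀ x ∈ Ω ∩ halfSpace n, HasAntiFracLap n s u x (-(c x * u x))) →
        (∀ x ∈ Ωt ∩ halfSpace n, ∀ y ∈ Ωt ∩ halfSpace n,
          u x / x 0 ≤ C * (u y / y 0)) ∧
        (∀ x ∈ Ωt ∩ halfSpace n,
          C⁻¹ * ANorm n s u ≤ u x / x 0 ∧ u x / x 0 ≤ C * ANorm n s u) := by
  obtain ⟨R, hRΩ⟩ := hΩbdd.exists_norm_le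
  obtain ⟨x₁, hx₁⟩ := hΩconn.nonempty
  have hR0 : 0 ≤ R := (norm_nonneg _).trans (hRΩ x₁ hx₁)
  have hK0 : 0 ≤ max K 0 := le_max_right _ _
  obtain ⟨η, Q, L, A, hη, hη1⟩ := exists_cutoff hΩopen hΩsymm hΩtbdd hΩtsymm hcpt
  obtain ⟨C₁, hC₁, hlow⟩ := lower_bound hs hη hRΩ hR0 hK0
  obtain ⟨C₂, hC₂, hupp⟩ := upper_bound hs hη hRΩ hR0 hK0
  set C := 1 + C₁ + C₂ + C₂ * C₁ with hC
  have hCC : 0 < C₂ * C₁ := mul_pos hC₂ hC₁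
  have hC0 : 0 < C := by linarith
  refine ⟨C, by linarith, fun c u α _ _ hc hhol hA hu0 heq => ?_⟩
  have hsol : IsNonnegSol n s Ω (max K 0) u := by
    refine ⟨hA, hu0, hhol.1.continuousOn, fun x hx => ⟨_, ?_, heq x hx⟩⟩
    have hux := hu0 x hx.2
    rw [abs_neg, abs_mul, abs_of_nonneg hux]
    exact mul_le_mul_of_nonneg_right ((hc x hx).trans (le_max_left _ _)) hux
  have hN := ANorm_nonneg (s := s) u
  have hl : ∀ x ∈ Ωt ∩ halfSpace n, ANorm n s u ≤ C₁ * (u x / x 0) := by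
    intro x hx
    have hx0 : 0 < x 0 := hx.2
    have h := hlow u hsol x hx.2
    rw [hη1 x hx.1, mul_one] at h
    rwa [← mul_div_assoc, le_div_iff₀ hx0]
  have hr : ∀ x ∈ Ωt ∩ halfSpace n, u x / x 0 ≤ C₂ * ANorm n s u := by
    intro x hx
    have hx0 : 0 < x 0 := hx.2
    have h := hupp u hsol x hx.2
    rw [hη1 x hx.1, one_pow, one_mul] at h
    rwa [div_le_iff₀ hx0]
  have hq : ∀ x ∈ Ωt ∩ halfSpace n, 0 ≤ u x / x 0 := by
    intro x hx
    have hx0 : 0 < x 0 := hx.2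
    exact div_nonneg (hu0 x hx.2) hx0.le
  refine ⟨fun x hx y hy => ?_, fun x hx => ⟨?_, ?_⟩⟩
  · calc u x / x 0 ≤ C₂ * ANorm n s u := hr x hx
      _ ≤ C₂ * (C₁ * (u y / y 0)) := mul_le_mul_of_nonneg_left (hl y hy) hC₂.le
      _ = C₂ * C₁ * (u y / y 0) := by ring
      _ ≤ C * (u y / y 0) := mul_le_mul_of_nonneg_right (by linarith) (hq y hy)
  · rw [inv_mul_le_iff₀ hC0]
    exact (hl x hx).trans (mul_le_mul_of_nonneg_right (by linarith) (hq x hx))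
  · exact (hr x hx).trans (mul_le_mul_of_nonneg_right (by linarith) hN)

end
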